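/- arXiv:2603.26805 — 10 statements merged into one kernel-verified Lean document; each statement's English description precedes it below -/
import Mathlib

section
/- Let ν₁ > 0, g ≠ 0, b₀ ∈ ℝ, and let f : ℝ → ℝ be differentiable. Define u(t,y) := f(t)·(cos(y₂ − b₀), 0), ω(t,y) := f(t)·sin(y₂ − b₀), and θ(t,y) := (1/g)·(f′(t) + ν₁ f(t))·y₁·sin(y₂ − b₀). Then ω = ∂₁u₂ − ∂₂u₁ is the vorticity of u, the transport term vanishes identically, u·∇ω ≡ 0, and the vorticity–buoyancy equation ∂ₜω + u·∇ω = ν₁Δω + g·∂₁θ holds at every (t,y) ∈ ℝ×ℝ². -/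
open MeasureTheory

/-- First partial derivative (in the first spatial variable) of a function on `ℝ²`. -/
noncomputable def pd1 (φ : ℝ × ℝ → ℝ) (y : ℝ × ℝ) : ℝ := deriv (fun s => φ (s, y.2)) y.1

/-- Second partial derivative (in the second spatial variable) of a function on `ℝ²`. -/
noncomputable def pd2 (φ : ℝ × ℝ → ℝ) (y : ℝ × ℝ) : ℝ := deriv (fun s => φ (y.1, s)) y.2

/-- The horizontal shear flow solves the unforced vorticity–buoyancy equation
`∂ₜω + u·∇ω = ν₁Δω + g∂₁θ`, with vanishing transport term. -/
theorem horizontal_shear_vorticity_equation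
    (ν₁ g b₀ : ℝ) (hν₁ : 0 < ν₁) (hg : g ≠ 0)
    (f : ℝ → ℝ) (hf : Differentiable ℝ f)
    (u : ℝ → ℝ × ℝ → ℝ × ℝ) (ω θ : ℝ → ℝ × ℝ → ℝ)
    (hu : ∀ t y, u t y = (f t * Real.cos (y.2 - b₀), 0))
    (hω : ∀ t y, ω t y = f t * Real.sin (y.2 - b₀))
    (hθ : ∀ t y, θ t y = (1 / g) * (deriv f t + ν₁ * f t) * y.1 * Real.sin (y.2 - b₀)) :
    (∀ t y, ω t y = pd1 (fun z => (u t z).2) y - pd2 (fun z => (u t z).1) y) ∧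
    (∀ t y, (u t y).1 * pd1 (ω t) y + (u t y).2 * pd2 (ω t) y = 0) ∧
    (∀ t y, deriv (fun s => ω s y) t
        + ((u t y).1 * pd1 (ω t) y + (u t y).2 * pd2 (ω t) y)
        = ν₁ * (pd1 (pd1 (ω t)) y + pd2 (pd2 (ω t)) y) + g * pd1 (θ t) y) := by
  have dsin : ∀ c x : ℝ, deriv (fun s => c * Real.sin (s - b₀)) x = c * Real.cos (x - b₀) := by
    intro c x
    have h := (((hasDerivAt_id x).sub_const b₀).sin).const_mul c
    simpa using h.deriv
  have dcos : ∀ c x : ℝ, deriv (fun s => c * Real.cos (s - b₀)) x = -(c * Real.sin (x - b₀)) := by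
    intro c x
    have h := (((hasDerivAt_id x).sub_const b₀).cos).const_mul c
    simpa using h.deriv
  have p1 : ∀ t, pd1 (ω t) = fun _ => 0 := by
    intro t; funext y; simp [pd1, hω]
  have p2 : ∀ t, pd2 (ω t) = fun y => f t * Real.cos (y.2 - b₀) := by
    intro t; funext y; simp only [pd2, hω, dsin]
  have p11 : ∀ t y, pd1 (pd1 (ω t)) y = 0 := by
    intro t y; rw [p1]; simp [pd1]
  have p22 : ∀ t y, pd2 (pd2 (ω t)) y = -(f t * Real.sin (y.2 - b₀)) := by
    intro t y; rw [p2]; simp only [pd2, dcos]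
  have pθ : ∀ t y, pd1 (θ t) y = (1 / g) * (deriv f t + ν₁ * f t) * Real.sin (y.2 - b₀) := by
    intro t y
    simp only [pd1, hθ]
    have h := ((hasDerivAt_id y.1).const_mul ((1 / g) * (deriv f t + ν₁ * f t))).mul_const
      (Real.sin (y.2 - b₀))
    simpa using h.deriv
  have pt : ∀ t y, deriv (fun s => ω s y) t = deriv f t * Real.sin (y.2 - b₀) := by
    intro t y
    simp only [hω]
    exact ((hf t).hasDerivAt.mul_const _).deriv
  have tr : ∀ t y, (u t y).1 * pd1 (ω t) y + (u t y).2 * pd2 (ω t) y = 0 := by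
    intro t y; rw [p1, hu]; simp
  refine ⟨?_, tr, ?_⟩
  · intro t y
    simp only [pd1, pd2, hu, hω, dcos]
    simp
  · intro t y
    rw [tr, pt, p11, p22, pθ]
    field_simp
    ring
end

section
/- Let ν₁, ν₂ > 0, g ≠ 0, b₀ ∈ ℝ, and let f : ℝ → ℝ be twice differentiable. With u(t,y) := f(t)·(cos(y₂ − b₀), 0) and θ(t,y) := (1/g)·(f′(t) + ν₁ f(t))·y₁·sin(y₂ − b₀), one has at every (t,y) ∈ ℝ×ℝ²: ∂ₜθ + u·∇θ − ν₂Δθ = (1/g)·[ (f″(t) + ν₁ f′(t))·y₁·sin(y₂ − b₀) + f(t)·(f′(t) + ν₁ f(t))·(1/2)·sin(2(y₂ − b₀)) + ν₂·(f′(t) + ν₁ f(t))·y₁·sin(y₂ − b₀) ]. Hence θ solves the forced temperature equation ∂ₜθ + u·∇θ = ν₂Δθ + h with this explicit smooth forcing h. -/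
open MeasureTheory

/-- The temperature profile of the horizontal shear flow solves the forced temperature equation
`∂ₜθ + u·∇θ = ν₂Δθ + h` with the explicit smooth forcing `h` displayed on the right-hand side. -/
theorem horizontal_shear_temperature_forcing
    (ν₁ ν₂ g b₀ : ℝ) (hν₁ : 0 < ν₁) (hν₂ : 0 < ν₂) (hg : g ≠ 0)
    (f : ℝ → ℝ) (hf : Differentiable ℝ f) (hf' : Differentiable ℝ (deriv f))
    (u : ℝ → ℝ × ℝ → ℝ × ℝ) (θ : ℝ → ℝ × ℝ → ℝ)
    (hu : ∀ t y, u t y = (f t * Real.cos (y.2 - b₀), 0))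
    (hθ : ∀ t y, θ t y = (1 / g) * (deriv f t + ν₁ * f t) * y.1 * Real.sin (y.2 - b₀)) :
    ∀ t y, deriv (fun s => θ s y) t
        + ((u t y).1 * pd1 (θ t) y + (u t y).2 * pd2 (θ t) y)
        - ν₂ * (pd1 (pd1 (θ t)) y + pd2 (pd2 (θ t)) y)
      = (1 / g) * ((deriv (deriv f) t + ν₁ * deriv f t) * y.1 * Real.sin (y.2 - b₀)
          + f t * (deriv f t + ν₁ * f t) * (1 / 2) * Real.sin (2 * (y.2 - b₀))
          + ν₂ * (deriv f t + ν₁ * f t) * y.1 * Real.sin (y.2 - b₀)) := by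
  intro t y
  have e1 : ∀ z, pd1 (θ t) z = (1 / g) * (deriv f t + ν₁ * f t) * Real.sin (z.2 - b₀) := by
    intro z
    simp only [pd1, hθ]
    have h := ((hasDerivAt_id' z.1).const_mul ((1 / g) * (deriv f t + ν₁ * f t))).mul_const
      (Real.sin (z.2 - b₀))
    rw [h.deriv]; ring
  have e2 : ∀ z, pd2 (θ t) z = (1 / g) * (deriv f t + ν₁ * f t) * z.1 * Real.cos (z.2 - b₀) := by
    intro z
    simp only [pd2, hθ]
    have h := (((hasDerivAt_id' z.2).sub_const b₀).sin).const_mul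
      ((1 / g) * (deriv f t + ν₁ * f t) * z.1)
    rw [h.deriv]; ring
  have e11 : pd1 (pd1 (θ t)) y = 0 := by
    rw [funext e1]
    simp only [pd1, deriv_const]
  have e22 : pd2 (pd2 (θ t)) y
      = -((1 / g) * (deriv f t + ν₁ * f t) * y.1 * Real.sin (y.2 - b₀)) := by
    rw [funext e2]
    simp only [pd2]
    have h := (((hasDerivAt_id' y.2).sub_const b₀).cos).const_mul
      ((1 / g) * (deriv f t + ν₁ * f t) * y.1)
    rw [h.deriv]; ring
  have et : deriv (fun s => θ s y) t
      = (1 / g) * (deriv (deriv f) t + ν₁ * deriv f t) * y.1 * Real.sin (y.2 - b₀) := by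
    simp only [hθ]
    have h := ((((hf' t).hasDerivAt.add ((hf t).hasDerivAt.const_mul ν₁)).const_mul
      (1 / g)).mul_const y.1).mul_const (Real.sin (y.2 - b₀))
    exact h.deriv
  rw [et, e1, e11, e22, hu, Real.sin_two_mul]
  ring
end

section
/- Let ν₁, ν₂ > 0, g ≠ 0, a₁ ∈ ℝ, and let f : ℝ → ℝ be twice differentiable. Define u(t,y) := f(t)·(0, cos(y₁ − a₁)), ω(t,y) := −f(t)·sin(y₁ − a₁), and θ(t,y) := (1/g)·(f′(t) + ν₁ f(t))·cos(y₁ − a₁). Then ω = ∂₁u₂ − ∂₂u₁ is the vorticity of u, and at every (t,y) ∈ ℝ×ℝ²: (i) ∂ₜω + u·∇ω = ν₁Δω + g·∂₁θ (with u·∇ω ≡ 0), and (ii) ∂ₜθ + u·∇θ − ν₂Δθ = (1/g)·[ (f″(t) + ν₁ f′(t)) + ν₂·(f′(t) + ν₁ f(t)) ]·cos(y₁ − a₁). -/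
open MeasureTheory

theorem aux_pd1_sin (c a : ℝ) :
    pd1 (fun z => c * Real.sin (z.1 - a)) = fun z => c * Real.cos (z.1 - a) := by
  funext y
  have h : HasDerivAt (fun s : ℝ => c * Real.sin (s - a)) (c * (Real.cos (y.1 - a) * 1)) y.1 :=
    (((hasDerivAt_id y.1).sub_const a).sin).const_mul c
  simpa [pd1] using h.deriv

theorem aux_pd1_cos (c a : ℝ) :
    pd1 (fun z => c * Real.cos (z.1 - a)) = fun z => (-c) * Real.sin (z.1 - a) := by
  funext y
  have h : HasDerivAt (fun s : ℝ => c * Real.cos (s - a)) (c * (-Real.sin (y.1 - a) * 1)) y.1 :=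
    (((hasDerivAt_id y.1).sub_const a).cos).const_mul c
  have h2 := h.deriv
  simp only [pd1]
  rw [h2]
  ring

theorem aux_pd2 (F : ℝ → ℝ) : pd2 (fun z => F z.1) = fun _ => 0 := by
  funext y
  simp [pd2]

/-- The vertical shear flow solves the vorticity–buoyancy equation exactly, and its
temperature profile solves the temperature equation with the displayed explicit forcing. -/
theorem vertical_shear_boussinesq_equations
    (ν₁ ν₂ g a₁ : ℝ) (hν₁ : 0 < ν₁) (hν₂ : 0 < ν₂) (hg : g ≠ 0)
    (f : ℝ → ℝ) (hf : Differentiable ℝ f) (hf' : Differentiable ℝ (deriv f))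
    (u : ℝ → ℝ × ℝ → ℝ × ℝ) (ω θ : ℝ → ℝ × ℝ → ℝ)
    (hu : ∀ t y, u t y = (0, f t * Real.cos (y.1 - a₁)))
    (hω : ∀ t y, ω t y = -(f t * Real.sin (y.1 - a₁)))
    (hθ : ∀ t y, θ t y = (1 / g) * (deriv f t + ν₁ * f t) * Real.cos (y.1 - a₁)) :
    (∀ t y, ω t y = pd1 (fun z => (u t z).2) y - pd2 (fun z => (u t z).1) y) ∧
    (∀ t y, (u t y).1 * pd1 (ω t) y + (u t y).2 * pd2 (ω t) y = 0) ∧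
    (∀ t y, deriv (fun s => ω s y) t
        + ((u t y).1 * pd1 (ω t) y + (u t y).2 * pd2 (ω t) y)
        = ν₁ * (pd1 (pd1 (ω t)) y + pd2 (pd2 (ω t)) y) + g * pd1 (θ t) y) ∧
    (∀ t y, deriv (fun s => θ s y) t
        + ((u t y).1 * pd1 (θ t) y + (u t y).2 * pd2 (θ t) y)
        - ν₂ * (pd1 (pd1 (θ t)) y + pd2 (pd2 (θ t)) y)
      = (1 / g) * ((deriv (deriv f) t + ν₁ * deriv f t)
          + ν₂ * (deriv f t + ν₁ * f t)) * Real.cos (y.1 - a₁)) := by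
  have hω' : ∀ t, ω t = fun z => (-f t) * Real.sin (z.1 - a₁) := by
    intro t; funext z; rw [hω]; ring
  have hθ' : ∀ t, θ t = fun z => ((1 / g) * (deriv f t + ν₁ * f t)) * Real.cos (z.1 - a₁) := by
    intro t; funext z; rw [hθ]
  have z2 : pd2 (fun _ => (0 : ℝ)) = fun _ => 0 := aux_pd2 (fun _ => 0)
  have ω2 : ∀ t, pd2 (ω t) = fun _ => 0 := by
    intro t; rw [hω']; exact aux_pd2 (fun s => (-f t) * Real.sin (s - a₁))
  have θ2 : ∀ t, pd2 (θ t) = fun _ => 0 := by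
    intro t; rw [hθ']
    exact aux_pd2 (fun s => ((1 / g) * (deriv f t + ν₁ * f t)) * Real.cos (s - a₁))
  have ωt : ∀ t y, deriv (fun s => ω s y) t = -(deriv f t * Real.sin (y.1 - a₁)) := by
    intro t y
    simp only [hω]
    exact (((hf t).hasDerivAt.mul_const _).neg).deriv
  have θt : ∀ t y, deriv (fun s => θ s y) t
      = (1 / g) * (deriv (deriv f) t + ν₁ * deriv f t) * Real.cos (y.1 - a₁) := by
    intro t y
    simp only [hθ]
    exact ((((hf' t).hasDerivAt.add ((hf t).hasDerivAt.const_mul ν₁)).const_mul (1 / g)).mul_const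
      _).deriv
  refine ⟨?_, ?_, ?_, ?_⟩
  · intro t y
    simp only [hu, hω, aux_pd1_cos, z2]
    ring
  · intro t y
    simp only [hu, ω2]
    ring
  · intro t y
    rw [ωt, ω2, z2, hω', hθ', aux_pd1_sin, aux_pd1_cos, aux_pd1_cos]
    simp only [hu]
    field_simp
    ring
  · intro t y
    rw [θt, θ2, z2, hθ', aux_pd1_cos, aux_pd1_sin]
    simp only [hu]
    ring
end

section
/- Let f : ℝ → ℝ be continuous and (a,b) ∈ ℝ². Define the cellular velocity field u(t,y) := f(t)·(−sin(y₂ − b), sin(y₁ − a)). Then: (i) u(t,(a,b)) = 0, so the constant path x(t) ≡ (a,b) solves ẋ(t) = u(t, x(t)); (ii) the spatial Jacobian satisfies Du(t,(a,b)) = f(t)·[[0, −1], [1, 0]]; (iii) for any t₀, φ₀ ∈ ℝ, the curve v(t) := (cos(φ₀ + F(t)), sin(φ₀ + F(t))), where F(t) := ∫_{t₀}^{t} f(s) ds, has |v(t)| = 1 for all t and solves the projective equation v′(t) = ⟨Du(t, x(t))·v(t), v(t)^⊥⟩·v(t)^⊥ with v(t₀) = (cos φ₀, sin φ₀). In particular,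 for t₁ ≥ t₀, v(t₁) is obtained from v(t₀) by a rotation of angle ∫_{t₀}^{t₁} f(s) ds. -/
open MeasureTheory

/-- The spatial Jacobian matrix `Du`, with entries `(Du)ᵢⱼ = ∂uᵢ/∂yⱼ`. -/
noncomputable def jac (u : ℝ → ℝ × ℝ → ℝ × ℝ) (t : ℝ) (y : ℝ × ℝ) :
    Matrix (Fin 2) (Fin 2) ℝ :=
  !![pd1 (fun z => (u t z).1) y, pd2 (fun z => (u t z).1) y;
     pd1 (fun z => (u t z).2) y, pd2 (fun z => (u t z).2) y]

/-- `Du` applied to a vector: `(Du·w)ᵢ = Σⱼ ∂ⱼuᵢ · wⱼ`, i.e. `(w·∇)u`. -/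
noncomputable def jacApply (u : ℝ → ℝ × ℝ → ℝ × ℝ) (t : ℝ) (y : ℝ × ℝ) (w : ℝ × ℝ) :
    ℝ × ℝ :=
  (w.1 * pd1 (fun z => (u t z).1) y + w.2 * pd2 (fun z => (u t z).1) y,
   w.1 * pd1 (fun z => (u t z).2) y + w.2 * pd2 (fun z => (u t z).2) y)

/-- The cellular flow `u(t,y) = f(t)·(−sin(y₂−b), sin(y₁−a))` fixes the particle `(a,b)`,
has Jacobian `f(t)·[[0,−1],[1,0]]` there, and rotates the projective vector at rate `f(t)`:
the explicit unit curve `v(t) = (cos(φ₀+F(t)), sin(φ₀+F(t)))` solves the projective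
equation `v′ = ⟨Du·v, v^⊥⟩·v^⊥`, so `v(t₁)` is `v(t₀)` rotated by `∫_{t₀}^{t₁} f`. -/
theorem cellular_flow_projective_rotation
    (f : ℝ → ℝ) (hf : Continuous f) (a b t₀ φ₀ : ℝ)
    (u : ℝ → ℝ × ℝ → ℝ × ℝ)
    (hu : ∀ t y, u t y = (-(f t * Real.sin (y.2 - b)), f t * Real.sin (y.1 - a)))
    (F : ℝ → ℝ) (hF : ∀ t, F t = ∫ s in t₀..t, f s)
    (v : ℝ → ℝ × ℝ)
    (hv : ∀ t, v t = (Real.cos (φ₀ + F t), Real.sin (φ₀ + F t))) :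
    (∀ t, u t (a, b) = 0) ∧
    (∀ t : ℝ, HasDerivAt (fun _ : ℝ => ((a, b) : ℝ × ℝ)) (u t (a, b)) t) ∧
    (∀ t, jac u t (a, b) = f t • !![0, -1; 1, 0]) ∧
    (∀ t, (v t).1 ^ 2 + (v t).2 ^ 2 = 1) ∧
    v t₀ = (Real.cos φ₀, Real.sin φ₀) ∧
    (∀ t, HasDerivAt v
      ((((jacApply u t (a, b) (v t)).1 * (-(v t).2)
          + (jacApply u t (a, b) (v t)).2 * (v t).1))
        • ((-(v t).2, (v t).1) : ℝ × ℝ)) t) ∧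
    (∀ t₁, t₀ ≤ t₁ →
      v t₁ = (Real.cos (∫ s in t₀..t₁, f s) * (v t₀).1
                - Real.sin (∫ s in t₀..t₁, f s) * (v t₀).2,
              Real.sin (∫ s in t₀..t₁, f s) * (v t₀).1
                + Real.cos (∫ s in t₀..t₁, f s) * (v t₀).2)) := by
  have hz : ∀ t, u t (a, b) = 0 := by
    intro t
    rw [hu]
    simp
  have d11 : ∀ t, pd1 (fun z => (u t z).1) (a, b) = 0 := by
    intro t
    simp [pd1, hu]
  have d22 : ∀ t, pd2 (fun z => (u t z).2) (a, b) = 0 := by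
    intro t
    simp [pd2, hu]
  have key : ∀ c x : ℝ, HasDerivAt (fun s : ℝ => c * Real.sin (s - x)) c x := by
    intro c x
    have h := (((hasDerivAt_id x).sub_const x).sin).const_mul c
    simpa using h
  have d12 : ∀ t, pd2 (fun z => (u t z).1) (a, b) = -f t := by
    intro t
    simp only [pd2, hu]
    exact (key (f t) b).neg.deriv
  have d21 : ∀ t, pd1 (fun z => (u t z).2) (a, b) = f t := by
    intro t
    simp only [pd1, hu]
    exact (key (f t) a).deriv
  have hF0 : F t₀ = 0 := by rw [hF]; simp
  have hFd : ∀ t, HasDerivAt F (f t) t := by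
    intro t
    have h : F = fun t => ∫ s in t₀..t, f s := funext hF
    rw [h]
    exact hf.integral_hasStrictDerivAt t₀ t |>.hasDerivAt
  refine ⟨hz, ?_, ?_, ?_, ?_, ?_, ?_⟩
  · intro t
    rw [hz]
    exact hasDerivAt_const t _
  · intro t
    rw [jac, d11, d12, d21, d22]
    ext i j
    fin_cases i <;> fin_cases j <;> simp
  · intro t
    rw [hv]
    exact Real.cos_sq_add_sin_sq _
  · rw [hv, hF0, add_zero]
  · intro t
    have h1 := ((hFd t).const_add φ₀).cos.prodMk ((hFd t).const_add φ₀).sin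
    have hv' : v = fun t => (Real.cos (φ₀ + F t), Real.sin (φ₀ + F t)) := funext hv
    simp only [jacApply, d11, d12, d21, d22]
    rw [hv']
    refine h1.congr_deriv ?_
    have hs := Real.sin_sq_add_cos_sq (φ₀ + F t)
    ext
    · simp only [Prod.smul_mk, smul_eq_mul]
      linear_combination (f t * Real.sin (φ₀ + F t)) * hs
    · simp only [Prod.smul_mk, smul_eq_mul]
      linear_combination (-f t * Real.cos (φ₀ + F t)) * hs
  · intro t₁ _
    rw [← hF, hv, hv, hF0, add_zero, Real.cos_add, Real.sin_add]
    ext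
    · simp only []
      ring
    · simp only []
      ring
end

section
/- Let ν₁ > 0, g ≠ 0, (a,b) ∈ ℝ², and let f : ℝ → ℝ be differentiable. Define u(t,y) := f(t)·(−sin(y₂ − b), sin(y₁ − a)), ω(t,y) := f(t)·(cos(y₁ − a) + cos(y₂ − b)), and θ(t,y) := (1/g)·(f′(t) + ν₁ f(t))·(y₁·cos(y₂ − b) + sin(y₁ − a)). Then ω = ∂₁u₂ − ∂₂u₁ is the vorticity of u, the cellular flow transports its own vorticity trivially, u·∇ω ≡ 0, and the vorticity–buoyancy equation ∂ₜω + u·∇ω = ν₁Δω + g·∂₁θ holds at every (t,y) ∈ ℝ×ℝ². -/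
open MeasureTheory

/-- The rotational cellular flow solves the unforced vorticity–buoyancy equation
`∂ₜω + u·∇ω = ν₁Δω + g∂₁θ`, with vanishing transport term `u·∇ω ≡ 0`. -/
theorem cellular_flow_vorticity_equation
    (ν₁ g a b : ℝ) (hν₁ : 0 < ν₁) (hg : g ≠ 0)
    (f : ℝ → ℝ) (hf : Differentiable ℝ f)
    (u : ℝ → ℝ × ℝ → ℝ × ℝ) (ω θ : ℝ → ℝ × ℝ → ℝ)
    (hu : ∀ t y, u t y = (-(f t * Real.sin (y.2 - b)), f t * Real.sin (y.1 - a)))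
    (hω : ∀ t y, ω t y = f t * (Real.cos (y.1 - a) + Real.cos (y.2 - b)))
    (hθ : ∀ t y, θ t y = (1 / g) * (deriv f t + ν₁ * f t)
        * (y.1 * Real.cos (y.2 - b) + Real.sin (y.1 - a))) :
    (∀ t y, ω t y = pd1 (fun z => (u t z).2) y - pd2 (fun z => (u t z).1) y) ∧
    (∀ t y, (u t y).1 * pd1 (ω t) y + (u t y).2 * pd2 (ω t) y = 0) ∧
    (∀ t y, deriv (fun s => ω s y) t
        + ((u t y).1 * pd1 (ω t) y + (u t y).2 * pd2 (ω t) y)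
        = ν₁ * (pd1 (pd1 (ω t)) y + pd2 (pd2 (ω t)) y) + g * pd1 (θ t) y) := by
  have hs : ∀ c x : ℝ, HasDerivAt (fun s => Real.sin (s - c)) (Real.cos (x - c)) x := by
    intro c x
    simpa using ((hasDerivAt_id x).sub_const c).sin
  have hc : ∀ c x : ℝ, HasDerivAt (fun s => Real.cos (s - c)) (-Real.sin (x - c)) x := by
    intro c x
    simpa using ((hasDerivAt_id x).sub_const c).cos
  have h1 : ∀ t, pd1 (ω t) = fun y => f t * -Real.sin (y.1 - a) := by
    intro t
    funext y
    simp only [pd1, hω]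
    exact (((hc a y.1).add_const _).const_mul (f t)).deriv
  have h2 : ∀ t, pd2 (ω t) = fun y => f t * -Real.sin (y.2 - b) := by
    intro t
    funext y
    simp only [pd2, hω]
    exact (((hc b y.2).const_add _).const_mul (f t)).deriv
  have h11 : ∀ t y, pd1 (pd1 (ω t)) y = f t * -Real.cos (y.1 - a) := by
    intro t y
    rw [h1]
    simp only [pd1]
    exact ((hs a y.1).fun_neg.const_mul (f t)).deriv
  have h22 : ∀ t y, pd2 (pd2 (ω t)) y = f t * -Real.cos (y.2 - b) := by
    intro t y
    rw [h2]
    simp only [pd2]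
    exact ((hs b y.2).fun_neg.const_mul (f t)).deriv
  have hth : ∀ t y, pd1 (θ t) y = (1 / g) * (deriv f t + ν₁ * f t)
      * (1 * Real.cos (y.2 - b) + Real.cos (y.1 - a)) := by
    intro t y
    simp only [pd1, hθ]
    exact ((((hasDerivAt_id' y.1).mul_const _).fun_add (hs a y.1)).const_mul _).deriv
  have ht : ∀ t y, deriv (fun s => ω s y) t
      = deriv f t * (Real.cos (y.1 - a) + Real.cos (y.2 - b)) := by
    intro t y
    simp only [hω]
    exact ((hf t).hasDerivAt.mul_const _).deriv
  have hv1 : ∀ t y, pd1 (fun z => (u t z).2) y = f t * Real.cos (y.1 - a) := by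
    intro t y
    simp only [pd1, hu]
    exact ((hs a y.1).const_mul (f t)).deriv
  have hv2 : ∀ t y, pd2 (fun z => (u t z).1) y = -(f t * Real.cos (y.2 - b)) := by
    intro t y
    simp only [pd2, hu]
    exact ((hs b y.2).const_mul (f t)).fun_neg.deriv
  refine ⟨fun t y => ?_, fun t y => ?_, fun t y => ?_⟩
  · rw [hv1, hv2, hω]; ring
  · simp only [h1, h2, hu]; ring
  · rw [h11, h22, hth, ht]
    simp only [h1, h2, hu]
    field_simp
    ring
end

section
/- Let ν₁, ν₂ > 0, g ≠ 0, (a,b) ∈ ℝ², and let f : ℝ → ℝ be twice differentiable. With u(t,y) := f(t)·(−sin(y₂ − b), sin(y₁ − a)) and θ(t,y) := (1/g)·(f′(t) + ν₁ f(t))·(y₁·cos(y₂ − b) + sin(y₁ − a)), one has at every (t,y) ∈ ℝ×ℝ²: ∂ₜθ + u·∇θ − ν₂Δθ = (1/g)·[ (f″(t) + ν₁ f′(t))·(y₁·cos(y₂ − b) + sin(y₁ − a)) + ν₂·(f′(t) + ν₁ f(t))·(y₁·cos(y₂ − b) + sin(y₁ − a)) − f(t)·(f′(t) + ν₁ f(t))·(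 sin(y₂ − b)·cos(y₂ − b) + sin(y₂ − b)·cos(y₁ − a) + y₁·sin(y₁ − a)·sin(y₂ − b) ) ]. Hence θ solves the forced temperature equation ∂ₜθ + u·∇θ = ν₂Δθ + h with this explicit smooth forcing h. -/
open MeasureTheory

/-- The temperature profile of the rotational cellular flow solves the forced temperature
equation `∂ₜθ + u·∇θ = ν₂Δθ + h` with the explicit smooth forcing `h` on the right-hand side. -/
theorem cellular_flow_temperature_forcing
    (ν₁ ν₂ g a b : ℝ) (hν₁ : 0 < ν₁) (hν₂ : 0 < ν₂) (hg : g ≠ 0)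
    (f : ℝ → ℝ) (hf : Differentiable ℝ f) (hf' : Differentiable ℝ (deriv f))
    (u : ℝ → ℝ × ℝ → ℝ × ℝ) (θ : ℝ → ℝ × ℝ → ℝ)
    (hu : ∀ t y, u t y = (-(f t * Real.sin (y.2 - b)), f t * Real.sin (y.1 - a)))
    (hθ : ∀ t y, θ t y = (1 / g) * (deriv f t + ν₁ * f t)
        * (y.1 * Real.cos (y.2 - b) + Real.sin (y.1 - a))) :
    ∀ t y, deriv (fun s => θ s y) t
        + ((u t y).1 * pd1 (θ t) y + (u t y).2 * pd2 (θ t) y)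
        - ν₂ * (pd1 (pd1 (θ t)) y + pd2 (pd2 (θ t)) y)
      = (1 / g) * ((deriv (deriv f) t + ν₁ * deriv f t)
            * (y.1 * Real.cos (y.2 - b) + Real.sin (y.1 - a))
          + ν₂ * (deriv f t + ν₁ * f t)
            * (y.1 * Real.cos (y.2 - b) + Real.sin (y.1 - a))
          - f t * (deriv f t + ν₁ * f t)
            * (Real.sin (y.2 - b) * Real.cos (y.2 - b)
              + Real.sin (y.2 - b) * Real.cos (y.1 - a)
              + y.1 * Real.sin (y.1 - a) * Real.sin (y.2 - b))) := by
  intro t y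
  have h1 : ∀ z : ℝ × ℝ, pd1 (θ t) z = (1 / g) * (deriv f t + ν₁ * f t)
      * (Real.cos (z.2 - b) + Real.cos (z.1 - a)) := by
    intro z
    simp only [pd1, hθ]
    refine HasDerivAt.deriv ?_
    have h := (((hasDerivAt_id z.1).mul_const (Real.cos (z.2 - b))).add
      ((hasDerivAt_id z.1).sub_const a).sin).const_mul ((1 / g) * (deriv f t + ν₁ * f t))
    convert h using 1
    all_goals first | rfl | simp
  have h2 : ∀ z : ℝ × ℝ, pd2 (θ t) z = (1 / g) * (deriv f t + ν₁ * f t)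
      * (z.1 * (-Real.sin (z.2 - b))) := by
    intro z
    simp only [pd2, hθ]
    refine HasDerivAt.deriv ?_
    have h := (((((hasDerivAt_id z.2).sub_const b).cos).const_mul z.1).add_const
      (Real.sin (z.1 - a))).const_mul ((1 / g) * (deriv f t + ν₁ * f t))
    convert h using 1
    all_goals first | rfl | simp
  have h11 : pd1 (pd1 (θ t)) y = (1 / g) * (deriv f t + ν₁ * f t)
      * (-Real.sin (y.1 - a)) := by
    rw [pd1]
    simp only [h1]
    refine HasDerivAt.deriv ?_
    have h := ((((hasDerivAt_id y.1).sub_const a).cos).const_add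
      (Real.cos (y.2 - b))).const_mul ((1 / g) * (deriv f t + ν₁ * f t))
    convert h using 1
    all_goals first | rfl | simp
  have h22 : pd2 (pd2 (θ t)) y = (1 / g) * (deriv f t + ν₁ * f t)
      * (y.1 * (-Real.cos (y.2 - b))) := by
    rw [pd2]
    simp only [h2]
    refine HasDerivAt.deriv ?_
    have h := ((((hasDerivAt_id y.2).sub_const b).sin.neg).const_mul y.1).const_mul
      ((1 / g) * (deriv f t + ν₁ * f t))
    convert h using 1
    all_goals first | rfl | simp
  have ht : deriv (fun s => θ s y) t = (1 / g) * (deriv (deriv f) t + ν₁ * deriv f t)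
      * (y.1 * Real.cos (y.2 - b) + Real.sin (y.1 - a)) := by
    simp only [hθ]
    refine HasDerivAt.deriv ?_
    exact ((((hf' t).hasDerivAt).add (((hf t).hasDerivAt).const_mul ν₁)).const_mul
      (1 / g)).mul_const _
  rw [ht, h11, h22, h1, h2, hu]
  ring
end

section
/- Let f : ℝ → ℝ be continuous, (a,b) ∈ ℝ², and define the hyperbolic cellular velocity field u(t,y) := f(t)·(sin(y₂ − b), sin(y₁ − a)), and let H := [[0,1],[1,0]]. Then u(t,(a,b)) = 0 and the spatial Jacobian satisfies Du(t,(a,b)) = f(t)·H. Moreover, with F(t) := ∫₀ᵗ f(s) ds, the matrix A(t) := cosh(F(t))·Id + sinh(F(t))·H satisfies A(0) = Id, A′(t) = f(t)·A(t)·H = A(t)·Du(t,(a,b)) for all t, det A(t) = 1 for all t, and A(t)·(1,1)ᵀ = e^{F(t)}·(1,1)ᵀ. In particular, if ∫₀¹ f(s) ds = log M for some M ≥ 1, then the Euclidean operator norm of A(1) is at least M. -/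
open MeasureTheory

attribute [local instance] Matrix.normedAddCommGroup Matrix.normedSpace

/-- The hyperbolic cellular flow `u(t,y) = f(t)·(sin(y₂−b), sin(y₁−a))` fixes `(a,b)`,
has Jacobian `f(t)·H` there with `H = [[0,1],[1,0]]`, and the matrix
`A(t) = cosh(F(t))·Id + sinh(F(t))·H` solves the Jacobian ODE, has determinant 1,
stretches `(1,1)ᵀ` by `e^{F(t)}`, and has Euclidean operator norm ≥ M at time 1
when `∫₀¹ f = log M`. -/
theorem hyperbolic_cellular_matrix_growth
    (f : ℝ → ℝ) (hf : Continuous f) (a b : ℝ)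
    (u : ℝ → ℝ × ℝ → ℝ × ℝ)
    (hu : ∀ t y, u t y = (f t * Real.sin (y.2 - b), f t * Real.sin (y.1 - a)))
    (H : Matrix (Fin 2) (Fin 2) ℝ) (hH : H = !![0, 1; 1, 0])
    (F : ℝ → ℝ) (hF : ∀ t, F t = ∫ s in (0:ℝ)..t, f s)
    (A : ℝ → Matrix (Fin 2) (Fin 2) ℝ)
    (hA : ∀ t, A t = Real.cosh (F t) • (1 : Matrix (Fin 2) (Fin 2) ℝ)
        + Real.sinh (F t) • H) :
    (∀ t, u t (a, b) = 0) ∧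
    (∀ t, jac u t (a, b) = f t • H) ∧
    A 0 = 1 ∧
    (∀ t, HasDerivAt A (f t • (A t * H)) t) ∧
    (∀ t, f t • (A t * H) = A t * jac u t (a, b)) ∧
    (∀ t, (A t).det = 1) ∧
    (∀ t, (A t).mulVec ![1, 1] = Real.exp (F t) • ![1, 1]) ∧
    (∀ M : ℝ, 1 ≤ M → (∫ s in (0:ℝ)..1, f s) = Real.log M →
      M ≤ ‖Matrix.toEuclideanCLM (𝕜 := ℝ) (A 1)‖) := by
  have hsin : ∀ c : ℝ, ∀ d : ℝ, deriv (fun s => c * Real.sin (s - d)) d = c := by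
    intro c d
    have h := (((hasDerivAt_id d).sub_const d).sin).const_mul c
    have h2 := h.deriv
    simpa using h2
  have hjac : ∀ t, jac u t (a, b) = f t • H := by
    intro t
    have e1 := hsin (f t) a
    have e2 := hsin (f t) b
    subst hH
    ext i j
    fin_cases i <;> fin_cases j <;> simp [jac, pd1, pd2, hu, -deriv_const_mul_field', e1, e2]
  have hHH : H * H = 1 := by
    subst hH
    ext i j
    fin_cases i <;> fin_cases j <;> simp [Matrix.mul_apply, Fin.sum_univ_two]
  have hFd : ∀ t, HasDerivAt F (f t) t := by
    intro t
    have : F = fun t => ∫ s in (0:ℝ)..t, f s := funext hF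
    rw [this]
    exact hf.integral_hasStrictDerivAt 0 t |>.hasDerivAt
  have hvec : ∀ t, (A t).mulVec ![1, 1] = Real.exp (F t) • ![1, 1] := by
    intro t
    have h1 := Real.cosh_add_sinh (F t)
    have h2 : Real.sinh (F t) + Real.cosh (F t) = Real.exp (F t) := by rw [← h1, add_comm]
    rw [hA]
    subst hH
    ext i
    fin_cases i <;> simp [Matrix.mulVec, dotProduct, Fin.sum_univ_two, h1, h2]
  refine ⟨?_, hjac, ?_, ?_, ?_, ?_, hvec, ?_⟩
  · intro t
    simp [hu]
  · rw [hA, hF]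
    simp
  · intro t
    have hAe : A = fun t => Real.cosh (F t) • (1 : Matrix (Fin 2) (Fin 2) ℝ)
        + Real.sinh (F t) • H := funext hA
    have h := ((hFd t).cosh.smul_const (1 : Matrix (Fin 2) (Fin 2) ℝ)).add
      ((hFd t).sinh.smul_const H)
    have e : f t • (A t * H) = (Real.sinh (F t) * f t) • (1 : Matrix (Fin 2) (Fin 2) ℝ)
        + (Real.cosh (F t) * f t) • H := by
      rw [hA, add_mul, smul_mul_assoc, smul_mul_assoc, hHH, one_mul, smul_add, smul_smul,
        smul_smul, mul_comm (f t), mul_comm (f t), add_comm]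
    rw [e, hAe]
    exact h
  · intro t
    rw [hjac, mul_smul_comm]
  · intro t
    have h := Real.cosh_sq (F t)
    rw [hA]
    subst hH
    simp [Matrix.det_fin_two]
    nlinarith
  · intro M hM hI
    have hM0 : 0 < M := by linarith
    have hexp : Real.exp (F 1) = M := by rw [hF, hI, Real.exp_log hM0]
    have h := (Matrix.toEuclideanCLM (𝕜 := ℝ) (A 1)).le_opNorm (WithLp.toLp 2 ![1, 1])
    have e : Matrix.toEuclideanCLM (𝕜 := ℝ) (A 1) (WithLp.toLp 2 ![1, 1])
        = M • (WithLp.toLp 2 ![1, 1] : EuclideanSpace ℝ (Fin 2)) := by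
      rw [Matrix.toEuclideanCLM_toLp, hvec, hexp]
      rfl
    rw [e, norm_smul, Real.norm_of_nonneg hM0.le] at h
    refine le_of_mul_le_mul_right h ?_
    rw [norm_pos_iff]
    intro h0
    have := congrArg (fun v : EuclideanSpace ℝ (Fin 2) => v 0) h0
    simp at this
end

section
/- For every α ∈ (0,1] and every T > 0 there exist ε₀ = ε₀(α,T) > 0 and C = C(α,T) > 0 with the following property. Let ε ∈ (0, ε₀), let L ≥ 0, and let f : ℝ → ℝ be differentiable on [T/2, T] with |f′(s) − f′(t)| ≤ L·|s − t|^α for all s,t ∈ [T/2, T]. If sup_{t ∈ [T/2,T]} |f(t)| ≤ ε and sup_{t ∈ [T/2,T]} |f′(t)| > ε^{α/(2(1+α))}, then L ≥ C⁻¹·ε^{−α/2}; in particular (sup|f| + sup|f′| + L)^{2/α} ≥ C⁻¹·ε⁻¹. -/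
/-- Landau–Kolmogorov-type interpolation on `[T/2, T]`: if `|f| ≤ ε` but
`|f′| > ε^{α/(2(1+α))}` somewhere, then the `α`-Hölder constant `L` of `f′` must be at
least `C⁻¹·ε^{−α/2}`, and in particular `(sup|f| + sup|f′| + L)^{2/α} ≥ C⁻¹·ε⁻¹`. -/
theorem holder_interpolation_smallness
    (α T : ℝ) (hα : α ∈ Set.Ioc (0:ℝ) 1) (hT : 0 < T) :
    ∃ ε₀ > (0:ℝ), ∃ C > (0:ℝ),
      ∀ ε ∈ Set.Ioo (0:ℝ) ε₀, ∀ L ≥ (0:ℝ), ∀ f f' : ℝ → ℝ,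
        (∀ t ∈ Set.Icc (T/2) T, HasDerivAt f (f' t) t) →
        (∀ s ∈ Set.Icc (T/2) T, ∀ t ∈ Set.Icc (T/2) T,
          |f' s - f' t| ≤ L * |s - t| ^ α) →
        (∀ t ∈ Set.Icc (T/2) T, |f t| ≤ ε) →
        (∃ t ∈ Set.Icc (T/2) T, ε ^ (α / (2 * (1 + α))) < |f' t|) →
        C⁻¹ * ε ^ (-(α / 2)) ≤ L ∧
        C⁻¹ * ε⁻¹ ≤ (sSup ((fun t => |f t|) '' Set.Icc (T/2) T)
            + sSup ((fun t => |f' t|) '' Set.Icc (T/2) T) + L) ^ (2 / α) := by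
  obtain ⟨hα0, hα1⟩ := hα
  have hp : 0 < (2 + α) / (2 * (1 + α)) := by positivity
  have h8 : (1:ℝ) ≤ 2 / α := by rw [le_div_iff₀ hα0]; linarith
  have hC : (0:ℝ) < 8 ^ (2 / α) := by positivity
  have hC8 : (8:ℝ) ≤ 8 ^ (2 / α) := by
    calc (8:ℝ) = 8 ^ (1:ℝ) := by simp
      _ ≤ 8 ^ (2 / α) := Real.rpow_le_rpow_of_exponent_le (by norm_num) h8
  refine ⟨(T / 16) ^ ((2 + α) / (2 * (1 + α)))⁻¹, by positivity, 8 ^ (2 / α), hC, ?_⟩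
  rintro ε ⟨hε, hεlt⟩ L hL f f' hd hH hf ⟨t₀, ht₀, hm⟩
  have hq : ε ^ ((2 + α) / (2 * (1 + α))) ≤ T / 16 := by
    have h1 := Real.rpow_le_rpow hε.le hεlt.le hp.le
    rwa [Real.rpow_inv_rpow (by positivity) hp.ne'] at h1
  have hq0 : 0 < ε ^ ((2 + α) / (2 * (1 + α))) := by positivity
  have hm0 : 0 < ε ^ (α / (2 * (1 + α))) := by positivity
  have hqm : ε ^ ((2 + α) / (2 * (1 + α))) * ε ^ (α / (2 * (1 + α))) = ε := by
    rw [← Real.rpow_add hε]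
    have : (2 + α) / (2 * (1 + α)) + α / (2 * (1 + α)) = 1 := by
      field_simp
      ring
    rw [this, Real.rpow_one]
  have hqa : ε ^ (-(α / 2)) * (ε ^ ((2 + α) / (2 * (1 + α)))) ^ α
      = ε ^ (α / (2 * (1 + α))) := by
    rw [← Real.rpow_mul hε.le, ← Real.rpow_add hε]
    congr 1
    field_simp
    ring
  generalize ε ^ ((2 + α) / (2 * (1 + α))) = q at *
  generalize ε ^ (α / (2 * (1 + α))) = m at *
  have key : 8⁻¹ * ε ^ (-(α / 2)) ≤ L := by
    obtain ⟨x, hx1, hx2, hx3, hx4⟩ :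
        ∃ x, T / 2 ≤ x ∧ x + 4 * q ≤ T ∧ x ≤ t₀ ∧ t₀ ≤ x + 4 * q := by
      obtain ⟨ha, hb⟩ := ht₀
      by_cases h : t₀ + 4 * q ≤ T
      · exact ⟨t₀, ha, h, le_rfl, by linarith⟩
      · exact ⟨t₀ - 4 * q, by linarith, by linarith, by linarith, by linarith⟩
    obtain ⟨ξ, ⟨hξ1, hξ2⟩, hξ⟩ := exists_hasDerivAt_eq_slope f f'
      (show x < x + 4 * q by linarith)
      (fun t ht => (hd t ⟨by linarith [ht.1], by linarith [ht.2]⟩).continuousAt.continuousWithinAt)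
      (fun t ht => hd t ⟨by linarith [ht.1], by linarith [ht.2]⟩)
    have e1 := abs_le.1 (hf x ⟨by linarith, by linarith⟩)
    have e2 := abs_le.1 (hf (x + 4 * q) ⟨by linarith, by linarith⟩)
    have hξm : |f' ξ| ≤ m / 2 := by
      rw [hξ, add_sub_cancel_left, abs_div, abs_of_pos (show 0 < 4 * q by linarith),
        div_le_iff₀ (by linarith)]
      have : |f (x + 4 * q) - f x| ≤ 2 * ε := abs_le.2 ⟨by linarith, by linarith⟩
      linarith
    have hh := hH t₀ ht₀ ξ ⟨by linarith, by linarith⟩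
    have hdist : |t₀ - ξ| ≤ 4 * q := abs_le.2 ⟨by linarith, by linarith⟩
    have hpow : |t₀ - ξ| ^ α ≤ 4 * q ^ α := by
      calc |t₀ - ξ| ^ α ≤ (4 * q) ^ α := Real.rpow_le_rpow (abs_nonneg _) hdist hα0.le
        _ = 4 ^ α * q ^ α := Real.mul_rpow (by norm_num) hq0.le
        _ ≤ 4 * q ^ α := by
          gcongr
          calc (4:ℝ) ^ α ≤ 4 ^ (1:ℝ) :=
                Real.rpow_le_rpow_of_exponent_le (by norm_num) hα1
            _ = 4 := by simp
    have h5 : L * |t₀ - ξ| ^ α ≤ L * (4 * q ^ α) := by gcongr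
    have h6 := abs_sub_abs_le_abs_sub (f' t₀) (f' ξ)
    have hqp : 0 < q ^ α := by positivity
    refine le_of_mul_le_mul_right ?_ hqp
    linarith
  have hε2 : 0 < ε ^ (-(α / 2)) := by positivity
  constructor
  · refine le_trans ?_ key
    gcongr
  · have s1 : 0 ≤ sSup ((fun t => |f t|) '' Set.Icc (T/2) T) :=
      Real.sSup_nonneg (by rintro _ ⟨t, -, rfl⟩; exact abs_nonneg _)
    have s2 : 0 ≤ sSup ((fun t => |f' t|) '' Set.Icc (T/2) T) :=
      Real.sSup_nonneg (by rintro _ ⟨t, -, rfl⟩; exact abs_nonneg _)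
    have : (8 ^ (2 / α))⁻¹ * ε⁻¹ = (8⁻¹ * ε ^ (-(α / 2))) ^ (2 / α) := by
      rw [Real.mul_rpow (by norm_num) hε2.le, Real.inv_rpow (by norm_num),
        ← Real.rpow_mul hε.le]
      have : -(α / 2) * (2 / α) = -1 := by field_simp
      rw [this, Real.rpow_neg_one]
    rw [this]
    exact Real.rpow_le_rpow (by positivity) (by linarith) (by positivity)
end

section
/- Let Z be a standard Borel space, P a Markov probability kernel on Z, and μ a Borel probability measure on Z that is stationary under P, i.e., ∫_Z P(z, ·) μ(dz) = μ. Let 𝒜 : Z → SL₂(ℝ) be measurable and assume z ↦ log‖𝒜(z)‖ and z ↦ log‖𝒜(z)⁻¹‖ are μ-integrable. For A ∈ SL₂(ℝ) let A• : S¹ → S¹ denote the induced projective map v ↦ A·v/‖A·v‖ on the unit circle S¹ ⊂ ℝ². Suppose ν : Z → 𝒫(S¹) is a measurable family of Borel probability measures on S¹ satisfying the twisted pullback condition ν_z = (𝒜(z)⁻¹)•_* ( ∫_Z ν_y P(z, dy) ) for μ-almost every z. Suppose further that the top Lyapunov exponent λ₊ := lim_{n→∞} (1/n)·E[ log‖𝒜(z_{n−1})⋯𝒜(z₁)·𝒜(z₀)‖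 ] — where (z₀, z₁, z₂, …) is the Markov chain with transition kernel P and initial law μ — exists and equals 0. Then the family of measures is almost surely invariant: (𝒜(z₀))•_* ν_{z₀} = ν_{z₁} for (μ ⊗ P)-almost every pair (z₀, z₁), where μ ⊗ P is the measure P(z₀, dz₁) μ(dz₀) on Z × Z. -/
open MeasureTheory ProbabilityTheory Filter

noncomputable instance : MeasurableSpace (Matrix (Fin 2) (Fin 2) ℝ) :=
  inferInstanceAs (MeasurableSpace (Fin 2 → Fin 2 → ℝ))

/-- The Euclidean operator norm of a 2×2 real matrix. -/
noncomputable def matOpNorm (B : Matrix (Fin 2) (Fin 2) ℝ) : ℝ :=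
  ‖Matrix.toEuclideanCLM (𝕜 := ℝ) B‖

/-- The projective action of a matrix on (unit) vectors: `v ↦ B·v/‖B·v‖`. -/
noncomputable def projAct (B : Matrix (Fin 2) (Fin 2) ℝ)
    (v : EuclideanSpace ℝ (Fin 2)) : EuclideanSpace ℝ (Fin 2) :=
  ‖Matrix.toEuclideanCLM (𝕜 := ℝ) B v‖⁻¹ • Matrix.toEuclideanCLM (𝕜 := ℝ) B v

/-- The law of the matrix product `𝒜(z_{n−1})⋯𝒜(z₁)·𝒜(z₀)` along the Markov chain with
transition kernel `P` started at `z₀ = z`: `prodLaw P 𝒜 0 z = δ_{Id}` and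
`prodLaw P 𝒜 (n+1) z` is obtained by drawing `z₁ ∼ P(z,·)`, forming the `n`-step product
started at `z₁`, and multiplying by `𝒜(z)` on the right. -/
noncomputable def prodLaw {Z : Type} [MeasurableSpace Z]
    (P : Kernel Z Z) (𝒜 : Z → Matrix (Fin 2) (Fin 2) ℝ) :
    ℕ → Z → Measure (Matrix (Fin 2) (Fin 2) ℝ)
  | 0, _ => Measure.dirac 1
  | (n + 1), z => ((P z).bind (prodLaw P 𝒜 n)).map (fun B => B * 𝒜 z)

abbrev E2 := EuclideanSpace ℝ (Fin 2)
abbrev M2 := Matrix (Fin 2) (Fin 2) ℝ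

instance instBorelM2 : BorelSpace (Matrix (Fin 2) (Fin 2) ℝ) :=
  inferInstanceAs (BorelSpace (Fin 2 → Fin 2 → ℝ))

instance instSCM2 : SecondCountableTopology (Matrix (Fin 2) (Fin 2) ℝ) :=
  inferInstanceAs (SecondCountableTopology (Fin 2 → Fin 2 → ℝ))

lemma act_apply (B : M2) (v : E2) (i : Fin 2) :
    Matrix.toEuclideanCLM (𝕜 := ℝ) B v i = B i 0 * v 0 + B i 1 * v 1 := by
  have : Matrix.toEuclideanCLM (𝕜 := ℝ) B v i = (Matrix.mulVec B v.ofLp) i := rfl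
  rw [this, Matrix.mulVec, dotProduct, Fin.sum_univ_two]

lemma projAct_projAct (C D : M2) (v : E2) :
    projAct C (projAct D v) = projAct (C * D) v := by
  unfold projAct
  rw [map_mul, mul_apply_eq_comp, map_smul]
  by_cases h : Matrix.toEuclideanCLM (𝕜 := ℝ) D v = 0
  · rw [h]; simp
  · have h' : ‖Matrix.toEuclideanCLM (𝕜 := ℝ) D v‖ ≠ 0 := norm_ne_zero_iff.mpr h
    rw [norm_smul, smul_smul, norm_inv, norm_norm, mul_inv, inv_inv, mul_right_comm,
      mul_inv_cancel₀ h', one_mul]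

lemma projAct_one (v : E2) (hv : ‖v‖ = 1) : projAct 1 v = v := by
  unfold projAct
  rw [map_one, one_apply_eq_self, hv]; simp

lemma act_lower (B : M2) (hB : B.det = 1) (v : E2) :
    ‖v‖ ≤ matOpNorm B * ‖Matrix.toEuclideanCLM (𝕜 := ℝ) B v‖ := by
  rcases eq_or_ne v 0 with rfl | hv
  · simp
  have hv' : 0 < ‖v‖ := norm_pos_iff.mpr hv
  set w : E2 := !₂[-(v 1), v 0] with hw
  have hwn : ‖w‖ = ‖v‖ := by
    rw [EuclideanSpace.norm_eq, EuclideanSpace.norm_eq]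
    simp [hw, Fin.sum_univ_two, add_comm]
  have h1 : ‖Matrix.toEuclideanCLM (𝕜 := ℝ) B w‖ ≤ matOpNorm B * ‖v‖ := by
    rw [← hwn]; exact ContinuousLinearMap.le_opNorm _ _
  have h2 : ‖v‖ ^ 2 ≤ ‖Matrix.toEuclideanCLM (𝕜 := ℝ) B v‖ * ‖Matrix.toEuclideanCLM (𝕜 := ℝ) B w‖ := by
    refine le_of_sq_le_sq ?_ (by positivity)
    rw [mul_pow, EuclideanSpace.norm_sq_eq, EuclideanSpace.norm_sq_eq, EuclideanSpace.norm_sq_eq]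
    simp only [Fin.sum_univ_two, Real.norm_eq_abs, sq_abs, act_apply]
    have e0 : w 0 = - v 1 := by simp [hw]
    have e1 : w 1 = v 0 := by simp [hw]
    rw [e0, e1]
    rw [Matrix.det_fin_two] at hB
    set a := B 0 0
    set b := B 0 1
    set c := B 1 0
    set d := B 1 1
    set x := v 0
    set y := v 1
    have key : x ^ 2 + y ^ 2 = (a * x + b * y) * (c * (-y) + d * x) - (c * x + d * y) * (a * (-y) + b * x) := by
      linear_combination (-(x ^ 2 + y ^ 2)) * hB
    rw [key]
    nlinarith [sq_nonneg ((a * x + b * y) * (a * (-y) + b * x) + (c * x + d * y) * (c * (-y) + d * x))]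
  have h3 : ‖v‖ * ‖v‖ ≤ (matOpNorm B * ‖Matrix.toEuclideanCLM (𝕜 := ℝ) B v‖) * ‖v‖ := by
    nlinarith [norm_nonneg (Matrix.toEuclideanCLM (𝕜 := ℝ) B v)]
  exact le_of_mul_le_mul_right h3 hv'

lemma one_le_matOpNorm (B : M2) (hB : B.det = 1) : 1 ≤ matOpNorm B := by
  set v : E2 := EuclideanSpace.single 0 1
  have hv : ‖v‖ = 1 := by simp [v]
  have h0 : 0 ≤ matOpNorm B := norm_nonneg _
  have h1 := act_lower B hB v
  have h2 : ‖Matrix.toEuclideanCLM (𝕜 := ℝ) B v‖ ≤ matOpNorm B * ‖v‖ :=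
    ContinuousLinearMap.le_opNorm _ _
  rw [hv] at h1 h2
  nlinarith

lemma act_ne_zero (B : M2) (hB : B.det = 1) (v : E2) (hv : v ≠ 0) :
    Matrix.toEuclideanCLM (𝕜 := ℝ) B v ≠ 0 := by
  intro h
  have := act_lower B hB v
  rw [h] at this
  simp at this
  exact hv this

lemma norm_projAct (B : M2) (hB : B.det = 1) (v : E2) (hv : ‖v‖ = 1) : ‖projAct B v‖ = 1 := by
  have hv0 : v ≠ 0 := by rintro rfl; simp at hv
  exact norm_smul_inv_norm (𝕜 := ℝ) (act_ne_zero B hB v hv0)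

lemma projAct_lip (B : M2) (hB : B.det = 1) (u v : E2) (hu : ‖u‖ = 1) (hv : ‖v‖ = 1) :
    ‖projAct B u - projAct B v‖ ≤ 2 * matOpNorm B ^ 2 * ‖u - v‖ := by
  have hu0 : u ≠ 0 := by rintro rfl; simp at hu
  have hv0 : v ≠ 0 := by rintro rfl; simp at hv
  have h0 : 0 ≤ matOpNorm B := norm_nonneg _
  unfold projAct
  have hl := act_lower B hB u
  have hd : ‖Matrix.toEuclideanCLM (𝕜 := ℝ) B u - Matrix.toEuclideanCLM (𝕜 := ℝ) B v‖ ≤ matOpNorm B * ‖u - v‖ := by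
    rw [← map_sub]; exact ContinuousLinearMap.le_opNorm _ _
  have hx := norm_pos_iff.mpr (act_ne_zero B hB u hu0)
  have hy := norm_pos_iff.mpr (act_ne_zero B hB v hv0)
  set x := Matrix.toEuclideanCLM (𝕜 := ℝ) B u
  set y := Matrix.toEuclideanCLM (𝕜 := ℝ) B v
  rw [hu] at hl
  have e : ‖x‖⁻¹ • x - ‖y‖⁻¹ • y = ‖x‖⁻¹ • (x - y) + (‖x‖⁻¹ * (‖y‖ - ‖x‖) * ‖y‖⁻¹) • y := by
    have : ‖x‖⁻¹ * (‖y‖ - ‖x‖) * ‖y‖⁻¹ = ‖x‖⁻¹ - ‖y‖⁻¹ := by field_simp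
    rw [this, smul_sub, sub_smul]; abel
  have hinv : ‖x‖⁻¹ ≤ matOpNorm B := by
    rw [inv_le_iff_one_le_mul₀ hx]; exact hl
  have hb : ‖‖x‖⁻¹ • x - ‖y‖⁻¹ • y‖ ≤ ‖x‖⁻¹ * ‖x - y‖ + ‖x‖⁻¹ * ‖x - y‖ := by
    rw [e]
    refine (norm_add_le _ _).trans ?_
    rw [norm_smul, norm_smul, norm_mul, norm_mul, norm_inv, norm_inv, norm_norm, norm_norm, mul_assoc (_ * _),
      inv_mul_cancel₀ hy.ne', mul_one]
    gcongr
    rw [Real.norm_eq_abs, norm_sub_rev]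
    exact abs_norm_sub_norm_le y x
  calc _ ≤ _ := hb
    _ = 2 * (‖x‖⁻¹ * ‖x - y‖) := by ring
    _ ≤ 2 * (matOpNorm B * (matOpNorm B * ‖u - v‖)) := by gcongr
    _ = _ := by ring

lemma continuous_clm : Continuous (fun B : M2 => Matrix.toEuclideanCLM (𝕜 := ℝ) B) :=
  LinearMap.continuous_of_finiteDimensional
    (Matrix.toEuclideanCLM (n := Fin 2) (𝕜 := ℝ)).toAlgEquiv.toLinearMap

lemma continuous_matOpNorm : Continuous matOpNorm := continuous_clm.norm

lemma measurable_projAct : Measurable (fun p : M2 × E2 => projAct p.1 p.2) := by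
  have h : Continuous (fun p : M2 × E2 => Matrix.toEuclideanCLM (𝕜 := ℝ) p.1 p.2) :=
    (continuous_clm.comp continuous_fst).clm_apply continuous_snd
  have h2 := h.measurable
  unfold projAct
  exact (h2.norm.inv).smul h2

lemma measurable_mulM2 : Measurable (fun p : M2 × M2 => p.1 * p.2) :=
  (continuous_fst.matrix_mul continuous_snd).measurable

lemma measurable_adj : Measurable (fun p : M2 => p.adjugate) :=
  (continuous_id.matrix_adjugate).measurable
lemma scalar_ineq (p q : ℝ) (hp : 0 ≤ p) (hq : 0 ≤ q) (h : p = 0 → q = 0) :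
    Real.negMulLog q + (√q - √p) ^ 2 ≤ Real.negMulLog p + (-Real.log p - 1) * (q - p) := by
  rcases hp.eq_or_lt with rfl | hp
  · simp [h rfl]
  rcases hq.eq_or_lt with rfl | hq
  · simp [Real.negMulLog, Real.sq_sqrt hp.le]; linarith
  have hs : 0 < √p := Real.sqrt_pos.mpr hp
  have hr : 0 < √q := Real.sqrt_pos.mpr hq
  have h1 := Real.log_le_sub_one_of_pos (div_pos hs hr)
  rw [Real.log_div hs.ne' hr.ne'] at h1
  have hlp : Real.log p = 2 * Real.log √p := by rw [Real.log_sqrt hp.le]; ring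
  have hlq : Real.log q = 2 * Real.log √q := by rw [Real.log_sqrt hq.le]; ring
  have hps : p = √p ^ 2 := (Real.sq_sqrt hp.le).symm
  have hqs : q = √q ^ 2 := (Real.sq_sqrt hq.le).symm
  unfold Real.negMulLog
  rw [hlp, hlq]
  set s := √p
  set r := √q
  have h2 : 2 * r ^ 2 * (Real.log s - Real.log r) ≤ 2 * r ^ 2 * (s / r - 1) := by gcongr
  have h3 : 2 * r ^ 2 * (s / r - 1) = 2 * r * s - 2 * r ^ 2 := by field_simp
  rw [hps, hqs]
  nlinarith

lemma entropy_step {Y ι : Type*} [MeasurableSpace Y] (ρ : Measure Y) [IsProbabilityMeasure ρ]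
    (S : Finset ι) (q : ι → Y → ℝ) (p : ι → ℝ) (hqm : ∀ i, Measurable (q i))
    (hq0 : ∀ i y, 0 ≤ q i y) (hq1 : ∀ i y, q i y ≤ 1) (hp : ∀ i, p i = ∫ y, q i y ∂ρ) :
    ∫⁻ y, ENNReal.ofReal (∑ i ∈ S, Real.negMulLog (q i y)) ∂ρ
      + ∫⁻ y, ENNReal.ofReal (∑ i ∈ S, (√(q i y) - √(p i)) ^ 2) ∂ρ
      ≤ ENNReal.ofReal (∑ i ∈ S, Real.negMulLog (p i)) := by
  have hp0 : ∀ i, 0 ≤ p i := fun i => by rw [hp]; exact integral_nonneg (hq0 i)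
  have hqi : ∀ i, Integrable (q i) ρ := fun i =>
    Integrable.of_bound (hqm i).aestronglyMeasurable 1
      (ae_of_all _ fun y => by rw [Real.norm_eq_abs, abs_of_nonneg (hq0 i y)]; exact hq1 i y)
  have hp1 : ∀ i, p i ≤ 1 := fun i => by
    rw [hp]
    calc _ ≤ ∫ y, (1 : ℝ) ∂ρ := integral_mono (hqi i) (integrable_const _) (hq1 i)
      _ = 1 := by simp
  have hn0 : ∀ i y, 0 ≤ Real.negMulLog (q i y) := fun i y => Real.negMulLog_nonneg (hq0 i y) (hq1 i y)
  have hnm : ∀ i, Measurable (fun y => Real.negMulLog (q i y)) := fun i =>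
    Real.continuous_negMulLog.measurable.comp (hqm i)
  have hni : ∀ i, Integrable (fun y => Real.negMulLog (q i y)) ρ := fun i =>
    Integrable.of_bound (hnm i).aestronglyMeasurable 1
      (ae_of_all _ fun y => by
        rw [Real.norm_eq_abs, abs_of_nonneg (hn0 i y)]
        rcases (hq0 i y).eq_or_lt with h | h
        · rw [← h]; simp
        · have := Real.one_sub_inv_le_log_of_pos h
          unfold Real.negMulLog
          have h2 : q i y * (1 - (q i y)⁻¹) ≤ q i y * Real.log (q i y) := by gcongr
          rw [mul_sub, mul_inv_cancel₀ h.ne'] at h2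
          linarith)
  have hsm : ∀ i, Measurable (fun y => (√(q i y) - √(p i)) ^ 2) := fun i =>
    (((hqm i).sqrt).sub_const _).pow_const 2
  have hsi : ∀ i, Integrable (fun y => (√(q i y) - √(p i)) ^ 2) ρ := fun i =>
    Integrable.of_bound (hsm i).aestronglyMeasurable 1
      (ae_of_all _ fun y => by
        rw [Real.norm_eq_abs, abs_of_nonneg (sq_nonneg _)]
        have a1 : √(q i y) ≤ 1 := Real.sqrt_le_one.mpr (hq1 i y)
        have a2 : √(p i) ≤ 1 := Real.sqrt_le_one.mpr (hp1 i)
        have a3 := Real.sqrt_nonneg (q i y)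
        have a4 := Real.sqrt_nonneg (p i)
        rw [sq_le_one_iff_abs_le_one, abs_le]
        constructor <;> linarith)
  have key : ∀ i, ∫ y, Real.negMulLog (q i y) ∂ρ + ∫ y, (√(q i y) - √(p i)) ^ 2 ∂ρ
      ≤ Real.negMulLog (p i) := by
    intro i
    rw [← integral_add (hni i) (hsi i)]
    have hz : p i = 0 → ∀ᵐ y ∂ρ, q i y = 0 := by
      intro h
      rw [hp, integral_eq_zero_iff_of_nonneg (hq0 i) (hqi i)] at h
      exact h
    have hlin : Integrable (fun y => (-Real.log (p i) - 1) * (q i y - p i)) ρ :=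
      ((hqi i).sub (integrable_const _)).const_mul _
    calc _ ≤ ∫ y, Real.negMulLog (p i) + (-Real.log (p i) - 1) * (q i y - p i) ∂ρ := by
          refine integral_mono_ae ((hni i).add (hsi i)) ((integrable_const _).add hlin) ?_
          by_cases h : p i = 0
          · filter_upwards [hz h] with y hy
            exact scalar_ineq _ _ (hp0 i) (hq0 i y) fun _ => hy
          · exact ae_of_all _ fun y => scalar_ineq _ _ (hp0 i) (hq0 i y) fun h' => absurd h' h
      _ = Real.negMulLog (p i) := by
          rw [integral_add (integrable_const _) hlin, integral_const_mul,
            integral_sub (hqi i) (integrable_const _), ← hp]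
          simp
  have hAi : Integrable (fun y => ∑ i ∈ S, Real.negMulLog (q i y)) ρ :=
    integrable_finsetSum _ fun i _ => hni i
  have hBi : Integrable (fun y => ∑ i ∈ S, (√(q i y) - √(p i)) ^ 2) ρ :=
    integrable_finsetSum _ fun i _ => hsi i
  rw [← ofReal_integral_eq_lintegral_ofReal hAi
      (ae_of_all _ fun y => Finset.sum_nonneg fun i _ => hn0 i y),
    ← ofReal_integral_eq_lintegral_ofReal hBi
      (ae_of_all _ fun y => Finset.sum_nonneg fun i _ => sq_nonneg _),
    ← ENNReal.ofReal_add (integral_nonneg fun y => Finset.sum_nonneg fun i _ => hn0 i y)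
      (integral_nonneg fun y => Finset.sum_nonneg fun i _ => sq_nonneg _)]
  apply ENNReal.ofReal_le_ofReal
  rw [integral_finsetSum _ fun i _ => hni i, integral_finsetSum _ fun i _ => hsi i,
    ← Finset.sum_add_distrib]
  exact Finset.sum_le_sum fun i _ => key i

lemma entropy_bound {ι : Type*} (S : Finset ι) (hS : S.Nonempty) (p : ι → ℝ) (hp0 : ∀ i, 0 ≤ p i)
    (hp1 : ∑ i ∈ S, p i ≤ 1) :
    ∑ i ∈ S, Real.negMulLog (p i) ≤ Real.log S.card + 1 := by
  have hn : (1 : ℝ) ≤ S.card := by exact_mod_cast hS.card_pos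
  have hn0 : (0 : ℝ) < S.card := by linarith
  have h1 : ∀ i ∈ S, Real.negMulLog (p i) ≤ p i * Real.log S.card + (S.card : ℝ)⁻¹ := by
    intro i _
    rcases (hp0 i).eq_or_lt with h | h
    · rw [← h]; simp
    have := Real.log_le_sub_one_of_pos (x := (S.card * p i)⁻¹) (by positivity)
    rw [Real.log_inv, Real.log_mul hn0.ne' h.ne'] at this
    have h2 : p i * -(Real.log S.card + Real.log (p i)) ≤ p i * ((S.card * p i)⁻¹ - 1) := by gcongr
    have h3 : p i * ((S.card * p i)⁻¹ - 1) = (S.card : ℝ)⁻¹ - p i := by field_simp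
    unfold Real.negMulLog
    nlinarith
  refine (Finset.sum_le_sum h1).trans ?_
  rw [Finset.sum_add_distrib, ← Finset.sum_mul]
  simp only [Finset.sum_const, nsmul_eq_mul]
  rw [mul_inv_cancel₀ hn0.ne']
  have : 0 ≤ Real.log S.card := Real.log_nonneg hn
  nlinarith

lemma hell_l1 {ι : Type*} (S : Finset ι) (p q : ι → ℝ) (hp0 : ∀ i, 0 ≤ p i) (hq0 : ∀ i, 0 ≤ q i)
    (hp1 : ∑ i ∈ S, p i ≤ 1) (hq1 : ∑ i ∈ S, q i ≤ 1) :
    (∑ i ∈ S, |q i - p i|) ^ 2 ≤ 4 * ∑ i ∈ S, (√(q i) - √(p i)) ^ 2 := by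
  have e : ∀ i, |q i - p i| = |√(q i) - √(p i)| * (√(q i) + √(p i)) := by
    intro i
    have h : q i - p i = (√(q i) - √(p i)) * (√(q i) + √(p i)) := by
      have a := Real.sq_sqrt (hp0 i)
      have b := Real.sq_sqrt (hq0 i)
      nlinarith
    rw [h, abs_mul, abs_of_nonneg (a := √(q i) + √(p i)) (by positivity)]
  simp only [e]
  refine (Finset.sum_mul_sq_le_sq_mul_sq S _ _).trans ?_
  simp only [sq_abs]
  rw [mul_comm]
  gcongr
  calc ∑ i ∈ S, (√(q i) + √(p i)) ^ 2 ≤ ∑ i ∈ S, (2 * q i + 2 * p i) := by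
        apply Finset.sum_le_sum
        intro i _
        have a := Real.sq_sqrt (hp0 i)
        have b := Real.sq_sqrt (hq0 i)
        nlinarith [sq_nonneg (√(q i) - √(p i))]
    _ = 2 * ∑ i ∈ S, q i + 2 * ∑ i ∈ S, p i := by
        rw [Finset.sum_add_distrib, Finset.mul_sum, Finset.mul_sum]
    _ ≤ 4 := by linarith

lemma osc_one {X ι : Type*} [MeasurableSpace X] (S : Finset ι) (c : X → ι) (K : Set X)
    (hc : ∀ i, MeasurableSet (c ⁻¹' {i})) (hcK : ∀ x ∈ K, c x ∈ S)
    (α : Measure X) [IsProbabilityMeasure α] (hα : ∀ᵐ x ∂α, x ∈ K)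
    (g : X → ℂ) (hg : Measurable g) (hg1 : ∀ x, ‖g x‖ ≤ 1) (w : ι → ℂ) (ω : ℝ)
    (hω : ∀ x ∈ K, ‖g x - w (c x)‖ ≤ ω) :
    ‖∫ x, g x ∂α - ∑ i ∈ S, α.real (c ⁻¹' {i}) * w i‖ ≤ ω := by
  classical
  have hgi : Integrable g α := Integrable.of_bound hg.aestronglyMeasurable 1 (ae_of_all _ hg1)
  have hii : ∀ i, Integrable ((c ⁻¹' {i}).indicator (fun _ => w i)) α := fun i =>
    (integrable_const _).indicator (hc i)
  have e : ∑ i ∈ S, α.real (c ⁻¹' {i}) * w i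
      = ∫ x, ∑ i ∈ S, (c ⁻¹' {i}).indicator (fun _ => w i) x ∂α := by
    rw [integral_finsetSum _ fun i _ => hii i]
    refine Finset.sum_congr rfl fun i _ => ?_
    rw [integral_indicator_const _ (hc i)]; simp
  rw [e, ← integral_sub hgi (integrable_finsetSum _ fun i _ => hii i)]
  have := norm_integral_le_of_norm_le_const (μ := α) (C := ω)
    (f := fun x => g x - ∑ i ∈ S, (c ⁻¹' {i}).indicator (fun _ => w i) x) (by
      filter_upwards [hα] with x hx
      have : ∑ i ∈ S, (c ⁻¹' {i}).indicator (fun _ => w i) x = w (c x) := by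
        rw [Finset.sum_eq_single (c x)]
        · simp
        · intro i _ hi; simp [Set.indicator, hi.symm]
        · intro h; exact absurd (hcK x hx) h
      rw [this]; exact hω x hx)
  simpa using this

lemma osc_two {X ι : Type*} [MeasurableSpace X] (S : Finset ι) (c : X → ι) (K : Set X)
    (hc : ∀ i, MeasurableSet (c ⁻¹' {i})) (hcK : ∀ x ∈ K, c x ∈ S)
    (α β : Measure X) [IsProbabilityMeasure α] [IsProbabilityMeasure β]
    (hα : ∀ᵐ x ∂α, x ∈ K) (hβ : ∀ᵐ x ∂β, x ∈ K)
    (g : X → ℂ) (hg : Measurable g) (hg1 : ∀ x, ‖g x‖ ≤ 1) (ω : ℝ)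
    (hω : ∀ x ∈ K, ∀ y ∈ K, c x = c y → ‖g x - g y‖ ≤ ω) :
    ‖∫ x, g x ∂α - ∫ x, g x ∂β‖
      ≤ ∑ i ∈ S, |α.real (c ⁻¹' {i}) - β.real (c ⁻¹' {i})| + 2 * ω := by
  classical
  set w : ι → ℂ := fun i => if h : ∃ x ∈ K, c x = i then g h.choose else 0 with hw
  have hwω : ∀ x ∈ K, ‖g x - w (c x)‖ ≤ ω := by
    intro x hx
    have h : ∃ y ∈ K, c y = c x := ⟨x, hx, rfl⟩
    simp only [hw, dif_pos h]
    exact hω x hx _ h.choose_spec.1 h.choose_spec.2.symm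
  have hw1 : ∀ i, ‖w i‖ ≤ 1 := by
    intro i
    simp only [hw]
    split_ifs
    · exact hg1 _
    · simp
  have h1 := osc_one S c K hc hcK α hα g hg hg1 w ω hwω
  have h2 := osc_one S c K hc hcK β hβ g hg hg1 w ω hwω
  set a := ∑ i ∈ S, α.real (c ⁻¹' {i}) * w i
  set b := ∑ i ∈ S, β.real (c ⁻¹' {i}) * w i
  have h3 : ‖a - b‖ ≤ ∑ i ∈ S, |α.real (c ⁻¹' {i}) - β.real (c ⁻¹' {i})| := by
    simp only [a, b]
    rw [← Finset.sum_sub_distrib]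
    refine (norm_sum_le _ _).trans (Finset.sum_le_sum fun i _ => ?_)
    rw [← sub_mul, norm_mul, ← Complex.ofReal_sub, Complex.norm_real, Real.norm_eq_abs]
    exact mul_le_of_le_one_right (abs_nonneg _) (hw1 i)
  calc _ = ‖(∫ x, g x ∂α - a) + (a - b) - (∫ x, g x ∂β - b)‖ := by congr 1; ring
    _ ≤ ‖∫ x, g x ∂α - a‖ + ‖a - b‖ + ‖∫ x, g x ∂β - b‖ :=
      (norm_sub_le _ _).trans (by gcongr; exact norm_add_le _ _)
    _ ≤ _ := by linarith

/-- the grid cell of a point -/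
noncomputable def gridCell (N : ℕ) (x : E2) : ℤ × ℤ := (⌊N * x 0⌋, ⌊N * x 1⌋)

/-- the finite set of grid cells that meet the circle -/
noncomputable def gridSet (N : ℕ) : Finset (ℤ × ℤ) := Finset.Icc (-(N : ℤ)) N ×ˢ Finset.Icc (-(N : ℤ)) N

lemma measurable_gridCell (N : ℕ) : Measurable (gridCell N) := by
  unfold gridCell
  have h : ∀ i : Fin 2, Measurable (fun x : E2 => x i) := fun i => by fun_prop
  exact (Int.measurable_floor.comp ((h 0).const_mul _)).prodMk
    (Int.measurable_floor.comp ((h 1).const_mul _))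

lemma gridCell_mem (N : ℕ) (x : E2) (hx : ‖x‖ = 1) : gridCell N x ∈ gridSet N := by
  have h : ∀ i : Fin 2, |x i| ≤ 1 := fun i => by
    rw [← hx, ← Real.norm_eq_abs]; exact PiLp.norm_apply_le x i
  have hN : (0 : ℝ) ≤ N := by positivity
  have key : ∀ i : Fin 2, ⌊N * x i⌋ ∈ Finset.Icc (-(N : ℤ)) N := by
    intro i
    obtain ⟨h1, h2⟩ := abs_le.mp (h i)
    rw [Finset.mem_Icc]
    constructor
    · rw [Int.le_floor]; push_cast; nlinarith
    · rw [← Int.floor_natCast (R := ℝ) N]; apply Int.floor_le_floor; nlinarith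
  exact Finset.mem_product.mpr ⟨key 0, key 1⟩

lemma gridSet_card (N : ℕ) : (gridSet N).card = (2 * N + 1) ^ 2 := by
  simp only [gridSet, Finset.card_product, Int.card_Icc]
  rw [sq]; congr 1 <;> omega

lemma gridCell_dist (N : ℕ) (hN : 0 < N) (x y : E2) (h : gridCell N x = gridCell N y) :
    ‖x - y‖ ≤ 2 / N := by
  have hN' : (0 : ℝ) < N := by exact_mod_cast hN
  have key : ∀ i : Fin 2, ⌊N * x i⌋ = ⌊N * y i⌋ → |x i - y i| ≤ 1 / N := by
    intro i hi
    have := Int.abs_sub_lt_one_of_floor_eq_floor hi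
    rw [← mul_sub, abs_mul, abs_of_pos hN'] at this
    rw [le_div_iff₀ hN']; linarith
  have h0 := key 0 (congrArg Prod.fst h)
  have h1 := key 1 (congrArg Prod.snd h)
  refine le_of_sq_le_sq ?_ (by positivity)
  rw [EuclideanSpace.norm_sq_eq, Fin.sum_univ_two]
  simp only [PiLp.sub_apply, Real.norm_eq_abs]
  have e : (2 / N : ℝ) ^ 2 = 4 * (1 / N) ^ 2 := by ring
  rw [e]
  have a0 := abs_nonneg (x 0 - y 0)
  have a1 := abs_nonneg (x 1 - y 1)
  have b0 := pow_le_pow_left₀ a0 h0 2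
  have b1 := pow_le_pow_left₀ a1 h1 2
  nlinarith [sq_nonneg (1 / N : ℝ)]

lemma sum_cells_le_one {X ι : Type*} [MeasurableSpace X] (S : Finset ι) (c : X → ι)
    (hc : ∀ i, MeasurableSet (c ⁻¹' {i})) (α : Measure X) [IsProbabilityMeasure α] :
    ∑ i ∈ S, α.real (c ⁻¹' {i}) ≤ 1 := by
  rw [← measureReal_biUnion_finset]
  · exact measureReal_le_one
  · intro i _ j _ hij
    exact Disjoint.preimage _ (by simpa using hij)
  · exact fun i _ => hc i
lemma measurable_map_param {α β γ : Type*} [MeasurableSpace α] [MeasurableSpace β]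
    [MeasurableSpace γ] (η : α → Measure β) (hη : Measurable η)
    (hp : ∀ a, IsProbabilityMeasure (η a)) (F : α × β → γ) (hF : Measurable F) :
    Measurable (fun a => (η a).map (fun b => F (a, b))) := by
  refine Measure.measurable_of_measurable_coe _ fun s hs => ?_
  have hFa : ∀ a, Measurable (fun b => F (a, b)) := fun a => hF.comp measurable_prodMk_left
  have e : (fun a => (η a).map (fun b => F (a, b)) s) = fun a => η a (Prod.mk a ⁻¹' (F ⁻¹' s)) := by
    funext a
    rw [Measure.map_apply (hFa a) hs]; rfl
  rw [e]
  let κ : Kernel α β := ⟨η, hη⟩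
  have : IsMarkovKernel κ := ⟨hp⟩
  exact Kernel.measurable_kernel_prodMk_left (κ := κ) (hF hs)

section walk
set_option linter.unusedSectionVars false
variable {Z : Type} [MeasurableSpace Z]

/-- one step of the skew product chain -/
noncomputable def stepQ (P : Kernel Z Z) (𝒜 : Z → M2) (x : Z × M2) : Measure (Z × M2) :=
  (P x.1).map (fun y => (y, 𝒜 x.1 * x.2))

/-- law of the skew product chain -/
noncomputable def walk (μ : Measure Z) (P : Kernel Z Z) (𝒜 : Z → M2) : ℕ → Measure (Z × M2)
  | 0 => μ.map (fun z => (z, 1))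
  | n + 1 => (walk μ P 𝒜 n).bind (stepQ P 𝒜)

/-- transition operator on functions -/
noncomputable def topOp (P : Kernel Z Z) (𝒜 : Z → M2) (f : Z × M2 → ENNReal) (x : Z × M2) :
    ENNReal := ∫⁻ y, f (y, 𝒜 x.1 * x.2) ∂(P x.1)

variable (μ : Measure Z) [IsProbabilityMeasure μ] (P : Kernel Z Z) [IsMarkovKernel P]
  (𝒜 : Z → M2) (h𝒜 : Measurable 𝒜)

include h𝒜

lemma measurable_skew : Measurable (fun p : (Z × M2) × Z => (p.2, 𝒜 p.1.1 * p.1.2)) :=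
  measurable_snd.prodMk (measurable_mulM2.comp
    ((h𝒜.comp measurable_fst.fst).prodMk measurable_fst.snd))

lemma measurable_stepQ : Measurable (stepQ P 𝒜) :=
  measurable_map_param (fun x : Z × M2 => P x.1) (P.measurable.comp measurable_fst)
    (fun x => inferInstance) _ (measurable_skew 𝒜 h𝒜)

lemma measurable_topOp' {f : (Z × M2) × Z → ENNReal} (hf : Measurable f) :
    Measurable (fun x => ∫⁻ y, f (x, y) ∂(P x.1)) :=
  Measurable.lintegral_kernel_prod_right' (κ := P.comap (Prod.fst : Z × M2 → Z) measurable_fst) hf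

lemma measurable_topOp {f : Z × M2 → ENNReal} (hf : Measurable f) : Measurable (topOp P 𝒜 f) :=
  measurable_topOp' P 𝒜 h𝒜 (hf.comp (measurable_skew 𝒜 h𝒜))

lemma lintegral_walk_succ (n : ℕ) {f : Z × M2 → ENNReal} (hf : Measurable f) :
    ∫⁻ x, f x ∂(walk μ P 𝒜 (n + 1)) = ∫⁻ x, topOp P 𝒜 f x ∂(walk μ P 𝒜 n) := by
  rw [walk, Measure.lintegral_bind (measurable_stepQ P 𝒜 h𝒜).aemeasurable hf.aemeasurable]
  refine lintegral_congr fun x => ?_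
  rw [stepQ, lintegral_map hf]
  · rfl
  · exact (measurable_skew 𝒜 h𝒜).comp measurable_prodMk_left

lemma lintegral_walk_zero {f : Z × M2 → ENNReal} (hf : Measurable f) :
    ∫⁻ x, f x ∂(walk μ P 𝒜 0) = ∫⁻ z, f (z, 1) ∂μ := by
  rw [walk, lintegral_map hf]
  exact measurable_id.prodMk measurable_const

lemma lintegral_walk (n : ℕ) {f : Z × M2 → ENNReal} (hf : Measurable f) :
    ∫⁻ x, f x ∂(walk μ P 𝒜 n) = ∫⁻ z, (topOp P 𝒜)^[n] f (z, 1) ∂μ := by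
  induction n generalizing f with
  | zero => exact lintegral_walk_zero μ P 𝒜 h𝒜 hf
  | succ n ih =>
    rw [lintegral_walk_succ μ P 𝒜 h𝒜 n hf, ih (measurable_topOp P 𝒜 h𝒜 hf)]
    rfl

lemma prodLaw_props (n : ℕ) : Measurable (prodLaw P 𝒜 n) ∧
    ∀ z, IsProbabilityMeasure (prodLaw P 𝒜 n z) := by
  induction n with
  | zero =>
    constructor
    · exact measurable_const
    · intro z; simp only [prodLaw]; infer_instance
  | succ n ih =>
    obtain ⟨hm, hp⟩ := ih
    have hb : ∀ z, IsProbabilityMeasure ((P z).bind (prodLaw P 𝒜 n)) := fun z =>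
      isProbabilityMeasure_bind hm.aemeasurable (ae_of_all _ hp)
    have hbm : Measurable (fun z => (P z).bind (prodLaw P 𝒜 n)) :=
      (Measure.measurable_bind' hm).comp P.measurable
    have hF : Measurable (fun p : Z × M2 => p.2 * 𝒜 p.1) :=
      measurable_mulM2.comp (measurable_snd.prodMk (h𝒜.comp measurable_fst))
    constructor
    · exact measurable_map_param _ hbm hb _ hF
    · intro z
      simp only [prodLaw]
      exact Measure.isProbabilityMeasure_map (hF.comp measurable_prodMk_left).aemeasurable

lemma topOp_prodLaw (n : ℕ) {g : M2 → ENNReal} (hg : Measurable g) (z : Z) (B : M2) :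
    (topOp P 𝒜)^[n] (fun x => g x.2) (z, B) = ∫⁻ C, g (C * B) ∂(prodLaw P 𝒜 n z) := by
  have hr : ∀ D : M2, Measurable (fun C : M2 => C * D) := fun D =>
    measurable_mulM2.comp measurable_prodMk_right
  induction n generalizing z B with
  | zero =>
    simp only [prodLaw, Function.iterate_zero, id]
    rw [lintegral_dirac' (f := fun C => g (C * B)) _ (hg.comp (hr B)), one_mul]
  | succ n ih =>
    rw [Function.iterate_succ_apply']
    simp only [prodLaw]
    rw [lintegral_map (f := fun C => g (C * B)) (hg.comp (hr B)) (hr _),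
      Measure.lintegral_bind (f := fun C => g (C * 𝒜 z * B)) (prodLaw_props P 𝒜 h𝒜 n).1.aemeasurable
        ((hg.comp (hr B)).comp (hr _)).aemeasurable]
    unfold topOp at ih ⊢
    refine lintegral_congr fun y => ?_
    simp only
    rw [ih y]
    simp only [Matrix.mul_assoc]

lemma lintegral_walk_snd (n : ℕ) {g : M2 → ENNReal} (hg : Measurable g) :
    ∫⁻ x, g x.2 ∂(walk μ P 𝒜 n) = ∫⁻ z, ∫⁻ C, g C ∂(prodLaw P 𝒜 n z) ∂μ := by
  rw [lintegral_walk μ P 𝒜 h𝒜 n (f := fun x => g x.2) (hg.comp measurable_snd)]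
  refine lintegral_congr fun z => ?_
  have := topOp_prodLaw P 𝒜 h𝒜 n hg z 1
  simpa using this

lemma lintegral_walk_fst (hstat : μ.bind (fun z => P z) = μ) (n : ℕ) {f : Z → ENNReal}
    (hf : Measurable f) :
    ∫⁻ x, f x.1 ∂(walk μ P 𝒜 n) = ∫⁻ z, f z ∂μ := by
  induction n generalizing f with
  | zero => rw [lintegral_walk_zero μ P 𝒜 h𝒜 (f := fun x => f x.1) (hf.comp measurable_fst)]
  | succ n ih =>
    rw [lintegral_walk_succ μ P 𝒜 h𝒜 n (f := fun x => f x.1) (hf.comp measurable_fst)]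
    have : ∀ x : Z × M2, topOp P 𝒜 (fun x => f x.1) x = (fun z => ∫⁻ y, f y ∂(P z)) x.1 :=
      fun x => rfl
    simp only [this]
    rw [ih hf.lintegral_kernel, ← Measure.lintegral_bind P.measurable.aemeasurable hf.aemeasurable]
    exact congrArg (fun m : Measure Z => ∫⁻ y, f y ∂m) hstat

lemma ae_walk_fst (hstat : μ.bind (fun z => P z) = μ) (n : ℕ) {p : Z → Prop}
    (hp : ∀ᵐ z ∂μ, p z) : ∀ᵐ x ∂(walk μ P 𝒜 n), p x.1 := by
  have e : (walk μ P 𝒜 n).map Prod.fst = μ := by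
    ext s hs
    rw [← lintegral_indicator_one hs, ← lintegral_indicator_one hs,
      lintegral_map (measurable_one.indicator hs) measurable_fst]
    exact lintegral_walk_fst μ P 𝒜 h𝒜 hstat n (measurable_one.indicator hs)
  rw [← e] at hp
  exact ae_of_ae_map measurable_fst.aemeasurable hp

lemma prodLaw_det (hdet : ∀ z, (𝒜 z).det = 1) (n : ℕ) (z : Z) :
    ∀ᵐ B ∂(prodLaw P 𝒜 n z), B.det = 1 := by
  have hms : MeasurableSet {B : M2 | B.det = 1} :=
    (measurableSet_singleton (1 : ℝ)).preimage (continuous_id.matrix_det).measurable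
  have hr : ∀ D : M2, Measurable (fun C : M2 => C * D) := fun D =>
    measurable_mulM2.comp measurable_prodMk_right
  induction n generalizing z with
  | zero => simp only [prodLaw]; rw [ae_dirac_iff hms]; simp
  | succ n ih =>
    simp only [prodLaw]
    rw [ae_map_iff (hr _).aemeasurable hms]
    simp only [Matrix.det_mul, hdet, mul_one]
    rw [ae_iff]
    change ((P z).bind (prodLaw P 𝒜 n)) {B : M2 | B.det = 1}ᶜ = 0
    rw [Measure.bind_apply hms.compl (prodLaw_props P 𝒜 h𝒜 n).1.aemeasurable]
    have : ∀ y, prodLaw P 𝒜 n y {B : M2 | B.det = 1}ᶜ = 0 := fun y => ih y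
    simp [this]

lemma walk_det (hdet : ∀ z, (𝒜 z).det = 1) (n : ℕ) :
    ∀ᵐ x ∂(walk μ P 𝒜 n), x.2.det = 1 := by
  have hms : MeasurableSet {B : M2 | B.det = 1} :=
    (measurableSet_singleton (1 : ℝ)).preimage (continuous_id.matrix_det).measurable
  have h := lintegral_walk_snd μ P 𝒜 h𝒜 n (measurable_one.indicator hms.compl)
  have h0 : ∀ z, ∫⁻ C, {B : M2 | B.det = 1}ᶜ.indicator 1 C ∂(prodLaw P 𝒜 n z) = 0 := by
    intro z
    rw [lintegral_indicator_one hms.compl]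
    exact prodLaw_det P 𝒜 h𝒜 hdet n z
  simp only [h0, lintegral_zero] at h
  rw [lintegral_eq_zero_iff (f := fun x : Z × M2 => {B : M2 | B.det = 1}ᶜ.indicator 1 x.2)
    ((measurable_one.indicator hms.compl).comp measurable_snd)] at h
  filter_upwards [h] with x hx
  by_contra hc
  simp [Set.indicator, hc] at hx

omit h𝒜 in
lemma measurable_lognorm : Measurable (fun B : M2 => ENNReal.ofReal (Real.log (matOpNorm B))) :=
  (continuous_matOpNorm.measurable.log).ennreal_ofReal

/-- expected log norm -/
noncomputable def walkL (μ : Measure Z) (P : Kernel Z Z) (𝒜 : Z → M2) (n : ℕ) : ENNReal :=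
  ∫⁻ x, ENNReal.ofReal (Real.log (matOpNorm x.2)) ∂(walk μ P 𝒜 n)

lemma walkL_ne_top (hstat : μ.bind (fun z => P z) = μ) (hdet : ∀ z, (𝒜 z).det = 1)
    (hint : Integrable (fun z => Real.log (matOpNorm (𝒜 z))) μ) (n : ℕ) :
    walkL μ P 𝒜 n ≠ ⊤ := by
  induction n with
  | zero =>
    unfold walkL
    rw [lintegral_walk_zero μ P 𝒜 h𝒜
      (f := fun x => ENNReal.ofReal (Real.log (matOpNorm x.2))) (measurable_lognorm.comp measurable_snd)]
    simp
  | succ n ih =>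
    unfold walkL at ih ⊢
    rw [lintegral_walk_succ μ P 𝒜 h𝒜 n
      (f := fun x => ENNReal.ofReal (Real.log (matOpNorm x.2))) (measurable_lognorm.comp measurable_snd)]
    refine ne_top_of_le_ne_top (b := ∫⁻ x, (ENNReal.ofReal (Real.log (matOpNorm (𝒜 x.1)))
        + ENNReal.ofReal (Real.log (matOpNorm x.2))) ∂(walk μ P 𝒜 n)) ?_ ?_
    · rw [lintegral_add_right (g := fun x : Z × M2 => ENNReal.ofReal (Real.log (matOpNorm x.2))) _
        (measurable_lognorm.comp measurable_snd)]
      refine ENNReal.add_ne_top.mpr ⟨?_, ih⟩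
      rw [lintegral_walk_fst μ P 𝒜 h𝒜 hstat n
        (f := fun z => ENNReal.ofReal (Real.log (matOpNorm (𝒜 z)))) (measurable_lognorm.comp h𝒜)]
      exact hint.lintegral_lt_top.ne
    · refine lintegral_mono_ae ?_
      filter_upwards [walk_det μ P 𝒜 h𝒜 hdet n] with x hx
      simp only [topOp, lintegral_const, measure_univ, mul_one]
      have h1 := one_le_matOpNorm _ (hdet x.1)
      have h2 := one_le_matOpNorm _ hx
      have h3 := one_le_matOpNorm (𝒜 x.1 * x.2) (by rw [Matrix.det_mul, hdet, hx, one_mul])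
      rw [← ENNReal.ofReal_add (Real.log_nonneg h1) (Real.log_nonneg h2)]
      apply ENNReal.ofReal_le_ofReal
      rw [← Real.log_mul (by linarith) (by linarith)]
      apply Real.log_le_log (by linarith)
      unfold matOpNorm
      rw [map_mul]
      exact norm_mul_le _ _

lemma walkL_eq (hstat : μ.bind (fun z => P z) = μ) (hdet : ∀ z, (𝒜 z).det = 1)
    (hint : Integrable (fun z => Real.log (matOpNorm (𝒜 z))) μ) (n : ℕ) :
    ∫ z, (∫ B, Real.log (matOpNorm B) ∂(prodLaw P 𝒜 n z)) ∂μ = (walkL μ P 𝒜 n).toReal := by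
  have hfin := walkL_ne_top μ P 𝒜 h𝒜 hstat hdet hint n
  have e : walkL μ P 𝒜 n = ∫⁻ z, ∫⁻ C, ENNReal.ofReal (Real.log (matOpNorm C)) ∂(prodLaw P 𝒜 n z) ∂μ :=
    lintegral_walk_snd μ P 𝒜 h𝒜 n measurable_lognorm
  rw [e] at hfin ⊢
  have hm : Measurable (fun z => ∫⁻ C, ENNReal.ofReal (Real.log (matOpNorm C)) ∂(prodLaw P 𝒜 n z)) :=
    (Measure.measurable_lintegral measurable_lognorm).comp (prodLaw_props P 𝒜 h𝒜 n).1
  rw [← integral_toReal hm.aemeasurable (ae_lt_top hm hfin)]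
  refine integral_congr_ae (ae_of_all _ fun z => ?_)
  refine integral_eq_lintegral_of_nonneg_ae ?_ continuous_matOpNorm.measurable.log.aestronglyMeasurable
  filter_upwards [prodLaw_det P 𝒜 h𝒜 hdet n z] with B hB
  exact Real.log_nonneg (one_le_matOpNorm B hB)

end walk
/-- mass of the cell `i` under the pulled back measure -/
noncomputable def cellP (N : ℕ) (m : Measure E2) (B : M2) (i : ℤ × ℤ) : ℝ :=
  (m.map (projAct B.adjugate)).real (gridCell N ⁻¹' {i})

lemma measurable_projAct2 {α : Type*} [MeasurableSpace α] {f : α → M2} {g : α → E2}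
    (hf : Measurable f) (hg : Measurable g) : Measurable (fun a => projAct (f a) (g a)) := by
  have h : Measurable (fun a => (f a, g a)) := hf.prodMk hg
  have e : (fun a => projAct (f a) (g a))
      = (fun p : M2 × E2 => projAct p.1 p.2) ∘ (fun a => (f a, g a)) := rfl
  rw [e]
  exact Measurable.comp measurable_projAct h

lemma measurable_projAct_right (B : M2) : Measurable (projAct B) :=
  measurable_projAct2 (f := fun _ => B) (g := fun v => v) measurable_const measurable_id

lemma measurableSet_cell (N : ℕ) (i : ℤ × ℤ) : MeasurableSet (gridCell N ⁻¹' {i}) :=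
  measurable_gridCell N (measurableSet_singleton i)

lemma char_lip (t x y : E2) :
    ‖Complex.exp ((inner ℝ x t : ℝ) * Complex.I) - Complex.exp ((inner ℝ y t : ℝ) * Complex.I)‖
      ≤ ‖t‖ * ‖x - y‖ := by
  have e : Complex.exp ((inner ℝ x t : ℝ) * Complex.I) - Complex.exp ((inner ℝ y t : ℝ) * Complex.I)
      = Complex.exp ((inner ℝ y t : ℝ) * Complex.I)
        * (Complex.exp (Complex.I * (inner ℝ (x - y) t : ℝ)) - 1) := by
    rw [mul_sub, ← Complex.exp_add, inner_sub_left]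
    push_cast
    congr 2
    · ring
    · ring
  rw [e, norm_mul, Complex.norm_exp_ofReal_mul_I, one_mul]
  refine Real.norm_exp_I_mul_ofReal_sub_one_le.trans ?_
  rw [mul_comm]
  exact norm_inner_le_norm _ _

lemma pt_ineq (α β : Measure E2) [IsProbabilityMeasure α] [IsProbabilityMeasure β]
    (hα : ∀ᵐ v ∂α, ‖v‖ = 1) (hβ : ∀ᵐ v ∂β, ‖v‖ = 1) (A B : M2) (hA : A.det = 1) (hB : B.det = 1)
    (N : ℕ) (hN : 0 < N) (R : ℝ) (hR : 1 < R) (t : E2) :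
    ‖charFun (α.map (projAct A)) t - charFun β t‖ ^ 2
      ≤ 8 * ∑ i ∈ gridSet N, (√(cellP N β (A * B) i) - √(cellP N α B i)) ^ 2
        + (128 * ‖t‖ ^ 2 * R ^ 4 / N ^ 2 + 4 / Real.log R * Real.log (matOpNorm (A * B))) := by
  have hAB : (A * B).det = 1 := by rw [Matrix.det_mul, hA, hB, one_mul]
  have hlR : 0 < Real.log R := Real.log_pos hR
  have hN' : (0 : ℝ) < N := by exact_mod_cast hN
  have h1 := one_le_matOpNorm _ hAB
  have hl0 : 0 ≤ Real.log (matOpNorm (A * B)) := Real.log_nonneg h1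
  have hs0 : 0 ≤ ∑ i ∈ gridSet N, (√(cellP N β (A * B) i) - √(cellP N α B i)) ^ 2 :=
    Finset.sum_nonneg fun i _ => sq_nonneg _
  have : IsProbabilityMeasure (α.map (projAct A)) :=
    Measure.isProbabilityMeasure_map (measurable_projAct_right A).aemeasurable
  by_cases hcase : R < matOpNorm (A * B)
  · have hD : ‖charFun (α.map (projAct A)) t - charFun β t‖ ≤ 2 := by
      refine (norm_sub_le _ _).trans ?_
      have a := norm_charFun_le_one (μ := α.map (projAct A)) t
      have b := norm_charFun_le_one (μ := β) t
      linarith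
    have h2 : 4 ≤ 4 / Real.log R * Real.log (matOpNorm (A * B)) := by
      rw [div_mul_eq_mul_div, le_div_iff₀ hlR]
      have := Real.log_le_log (by linarith) hcase.le
      linarith
    have h3 : 0 ≤ 128 * ‖t‖ ^ 2 * R ^ 4 / N ^ 2 := by positivity
    have h4 := pow_le_pow_left₀ (norm_nonneg _) hD 2
    linarith
  push Not at hcase
  set m1 := α.map (projAct B.adjugate) with hm1
  set m2 := β.map (projAct (A * B).adjugate) with hm2
  have : IsProbabilityMeasure m1 :=
    Measure.isProbabilityMeasure_map (measurable_projAct_right _).aemeasurable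
  have : IsProbabilityMeasure m2 :=
    Measure.isProbabilityMeasure_map (measurable_projAct_right _).aemeasurable
  have hK : MeasurableSet {x : E2 | ‖x‖ = 1} :=
    (measurableSet_singleton (1 : ℝ)).preimage continuous_norm.measurable
  have hadj : ∀ C : M2, C.det = 1 → C.adjugate.det = 1 := fun C hC => by
    rw [Matrix.det_adjugate, hC]; simp
  have hk1 : ∀ᵐ x ∂m1, x ∈ {x : E2 | ‖x‖ = 1} := by
    refine (ae_map_iff (measurable_projAct_right _).aemeasurable hK).mpr ?_
    filter_upwards [hα] with v hv
    exact norm_projAct _ (hadj B hB) v hv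
  have hk2 : ∀ᵐ x ∂m2, x ∈ {x : E2 | ‖x‖ = 1} := by
    refine (ae_map_iff (measurable_projAct_right _).aemeasurable hK).mpr ?_
    filter_upwards [hβ] with v hv
    exact norm_projAct _ (hadj _ hAB) v hv
  set φ : E2 → ℂ := fun x => Complex.exp ((inner ℝ x t : ℝ) * Complex.I) with hφ
  have hφm : Measurable φ := by
    have : Continuous φ := by fun_prop
    exact this.measurable
  set g : E2 → ℂ := fun x => φ (projAct (A * B) x) with hg
  have hgm : Measurable g := hφm.comp (measurable_projAct_right _)
  have hg1 : ∀ x, ‖g x‖ ≤ 1 := fun x => (Complex.norm_exp_ofReal_mul_I _).le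
  have e1 : ∫ x, g x ∂m1 = charFun (α.map (projAct A)) t := by
    rw [hm1, charFun_apply, integral_map (measurable_projAct_right _).aemeasurable
      hgm.aestronglyMeasurable, integral_map (measurable_projAct_right _).aemeasurable
      hφm.aestronglyMeasurable]
    refine integral_congr_ae (ae_of_all _ fun v => ?_)
    simp only [hg, hφ]
    rw [projAct_projAct, Matrix.mul_assoc, Matrix.mul_adjugate, hB, one_smul, Matrix.mul_one]
  have e2 : ∫ x, g x ∂m2 = charFun β t := by
    rw [hm2, charFun_apply, integral_map (measurable_projAct_right _).aemeasurable
      hgm.aestronglyMeasurable]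
    refine integral_congr_ae ?_
    filter_upwards [hβ] with v hv
    simp only [hg, hφ]
    rw [projAct_projAct, Matrix.mul_adjugate, hAB, one_smul, projAct_one v hv]
  have hosc := osc_two (gridSet N) (gridCell N) {x : E2 | ‖x‖ = 1} (measurableSet_cell N)
    (fun x hx => gridCell_mem N x hx) m2 m1 hk2 hk1 g hgm hg1 (4 * ‖t‖ * R ^ 2 / N) (by
      intro x hx y hy hxy
      calc ‖g x - g y‖ ≤ ‖t‖ * ‖projAct (A * B) x - projAct (A * B) y‖ := char_lip t _ _
        _ ≤ ‖t‖ * (2 * matOpNorm (A * B) ^ 2 * ‖x - y‖) := by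
            gcongr; exact projAct_lip _ hAB x y hx hy
        _ ≤ ‖t‖ * (2 * R ^ 2 * (2 / N)) := by
            gcongr; exact gridCell_dist N hN x y hxy
        _ = _ := by ring)
  rw [e1, e2, norm_sub_rev] at hosc
  have hl1 := hell_l1 (gridSet N) (cellP N α B) (cellP N β (A * B))
    (fun i => measureReal_nonneg) (fun i => measureReal_nonneg)
    (sum_cells_le_one _ _ (measurableSet_cell N) m1) (sum_cells_le_one _ _ (measurableSet_cell N) m2)
  change _ ≤ ∑ i ∈ gridSet N, |cellP N β (A * B) i - cellP N α B i| + _ at hosc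
  set L1 := ∑ i ∈ gridSet N, |cellP N β (A * B) i - cellP N α B i|
  set w := 4 * ‖t‖ * R ^ 2 / N with hw
  have h5 := pow_le_pow_left₀ (norm_nonneg _) hosc 2
  have h6 : (L1 + 2 * w) ^ 2 ≤ 2 * L1 ^ 2 + 8 * w ^ 2 := by nlinarith [sq_nonneg (L1 - 2 * w)]
  have h7 : 8 * w ^ 2 = 128 * ‖t‖ ^ 2 * R ^ 4 / N ^ 2 := by rw [hw]; ring
  have h8 : 0 ≤ 4 / Real.log R * Real.log (matOpNorm (A * B)) := by positivity
  linarith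

section main
set_option linter.unusedSectionVars false
variable {Z : Type} [MeasurableSpace Z]
  (P : Kernel Z Z) [IsMarkovKernel P] (μ : Measure Z) [IsProbabilityMeasure μ]
  (𝒜 : Z → M2) (h𝒜 : Measurable 𝒜) (hdet : ∀ z, (𝒜 z).det = 1)
  (ν : Z → Measure E2) (hν : Measurable ν) (hνp : ∀ z, IsProbabilityMeasure (ν z))

include hν hνp in
lemma measurable_cellP (N : ℕ) (i : ℤ × ℤ) :
    Measurable (fun x : Z × M2 => cellP N (ν x.1) x.2 i) := by
  have h := measurable_map_param (fun x : Z × M2 => ν x.1) (hν.comp measurable_fst)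
    (fun x => hνp x.1) (fun p : (Z × M2) × E2 => projAct p.1.2.adjugate p.2)
    (measurable_projAct2 (measurable_adj.comp measurable_fst.snd) measurable_snd)
  exact ((Measure.measurable_coe (measurableSet_cell N i)).comp h).ennreal_toReal

/-- the entropy of the grid partition -/
noncomputable def entG (ν : Z → Measure E2) (N : ℕ) (x : Z × M2) : ENNReal :=
  ENNReal.ofReal (∑ i ∈ gridSet N, Real.negMulLog (cellP N (ν x.1) x.2 i))

/-- squared Hellinger distance -/
noncomputable def hellH (𝒜 : Z → M2) (ν : Z → Measure E2) (N : ℕ) (p : (Z × M2) × Z) : ENNReal :=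
  ENNReal.ofReal (∑ i ∈ gridSet N,
    (√(cellP N (ν p.2) (𝒜 p.1.1 * p.1.2) i) - √(cellP N (ν p.1.1) p.1.2 i)) ^ 2)

/-- squared defect of invariance -/
noncomputable def defD (𝒜 : Z → M2) (ν : Z → Measure E2) (t : E2) (p : Z × Z) : ENNReal :=
  ENNReal.ofReal (‖charFun ((ν p.1).map (projAct (𝒜 p.1))) t - charFun (ν p.2) t‖ ^ 2)

include hν hνp in
lemma measurable_entG (N : ℕ) : Measurable (entG ν N) := by
  unfold entG
  refine (Finset.measurable_fun_sum _ fun i _ => ?_).ennreal_ofReal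
  exact Real.continuous_negMulLog.measurable.comp (measurable_cellP ν hν hνp N i)

include h𝒜 hν hνp in
lemma measurable_hellH (N : ℕ) : Measurable (hellH 𝒜 ν N) := by
  unfold hellH
  refine (Finset.measurable_fun_sum _ fun i _ => ?_).ennreal_ofReal
  have h1 := (measurable_cellP ν hν hνp N i).comp (measurable_skew 𝒜 h𝒜)
  have h2 := (measurable_cellP ν hν hνp N i).comp
    (measurable_fst : Measurable (Prod.fst : (Z × M2) × Z → Z × M2))
  exact (h1.sqrt.sub h2.sqrt).pow_const 2

lemma measurable_charFun_param {α : Type*} [MeasurableSpace α] (η : α → Measure E2)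
    (hη : Measurable η) (hp : ∀ a, IsProbabilityMeasure (η a)) (t : E2) :
    Measurable (fun a => charFun (η a) t) := by
  let κ : Kernel α E2 := ⟨η, hη⟩
  have : IsMarkovKernel κ := ⟨hp⟩
  have hc : Continuous (fun x : E2 => Complex.exp ((inner ℝ x t : ℝ) * Complex.I)) := by fun_prop
  exact (StronglyMeasurable.integral_kernel (κ := κ) hc.stronglyMeasurable).measurable

include h𝒜 hν hνp in
lemma measurable_defD (t : E2) : Measurable (defD 𝒜 ν t) := by
  unfold defD
  have hm := measurable_map_param ν hν hνp (fun p : Z × E2 => projAct (𝒜 p.1) p.2)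
    (measurable_projAct2 (h𝒜.comp measurable_fst) measurable_snd)
  have hpm : ∀ z, IsProbabilityMeasure ((ν z).map (projAct (𝒜 z))) := fun z => by
    have := hνp z
    exact Measure.isProbabilityMeasure_map (measurable_projAct_right _).aemeasurable
  have hm' : Measurable (fun z => (ν z).map (projAct (𝒜 z))) := hm
  have h1 := measurable_charFun_param (fun z => (ν z).map (projAct (𝒜 z))) hm' hpm t
  have h2 := measurable_charFun_param ν hν hνp t
  have h1' : Measurable (fun p : Z × Z => charFun ((ν p.1).map (projAct (𝒜 p.1))) t) := by
    have := h1.comp (measurable_fst : Measurable (Prod.fst : Z × Z → Z))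
    exact this
  have h2' : Measurable (fun p : Z × Z => charFun (ν p.2) t) := by
    have := h2.comp (measurable_snd : Measurable (Prod.snd : Z × Z → Z))
    exact this
  exact ((h1'.sub h2').norm.pow_const 2).ennreal_ofReal

include hν hνp in
lemma cellP_mart (N : ℕ) (i : ℤ × ℤ) (z : Z) (B : M2)
    (hz : ν z = Measure.map (projAct (𝒜 z).adjugate) ((P z).bind ν)) :
    cellP N (ν z) B i = ∫ y, cellP N (ν y) (𝒜 z * B) i ∂(P z) := by
  have hms := measurable_projAct_right (𝒜 z * B).adjugate (measurableSet_cell N i)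
  have e : cellP N (ν z) B i
      = (∫⁻ y, ν y (projAct (𝒜 z * B).adjugate ⁻¹' (gridCell N ⁻¹' {i})) ∂(P z)).toReal := by
    unfold cellP
    rw [hz, Measure.map_map (measurable_projAct_right _) (measurable_projAct_right _)]
    have : projAct B.adjugate ∘ projAct (𝒜 z).adjugate = projAct (𝒜 z * B).adjugate := by
      funext v
      rw [Function.comp_apply, projAct_projAct, Matrix.adjugate_mul_distrib]
    rw [this, Measure.real, Measure.map_apply (measurable_projAct_right _) (measurableSet_cell N i),
      Measure.bind_apply hms hν.aemeasurable]
  rw [e, ← integral_toReal]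
  · refine integral_congr_ae (ae_of_all _ fun y => ?_)
    simp only [cellP, Measure.real]
    rw [Measure.map_apply (measurable_projAct_right _) (measurableSet_cell N i)]
  · exact ((Measure.measurable_coe hms).comp hν).aemeasurable
  · exact ae_of_all _ fun y => by have := hνp y; exact measure_lt_top _ _

include h𝒜 hdet hν hνp in
lemma ent_walk_step (hstat : μ.bind (fun z => P z) = μ)
    (hpull : ∀ᵐ z ∂μ, ν z = Measure.map (projAct (𝒜 z).adjugate) ((P z).bind ν)) (N n : ℕ) :
    ∫⁻ x, entG ν N x ∂(walk μ P 𝒜 (n + 1))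
      + ∫⁻ x, ∫⁻ y, hellH 𝒜 ν N (x, y) ∂(P x.1) ∂(walk μ P 𝒜 n)
      ≤ ∫⁻ x, entG ν N x ∂(walk μ P 𝒜 n) := by
  rw [lintegral_walk_succ μ P 𝒜 h𝒜 n (measurable_entG ν hν hνp N),
    ← lintegral_add_left (measurable_topOp P 𝒜 h𝒜 (measurable_entG ν hν hνp N))]
  refine lintegral_mono_ae ?_
  filter_upwards [ae_walk_fst μ P 𝒜 h𝒜 hstat n hpull] with x hx
  have hpm : ∀ y B, IsProbabilityMeasure ((ν y).map (projAct B)) := fun y B => by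
    have := hνp y
    exact Measure.isProbabilityMeasure_map (measurable_projAct_right _).aemeasurable
  have hmc : ∀ i, Measurable (fun y => cellP N (ν y) (𝒜 x.1 * x.2) i) := fun i => by
    have h1 : Measurable (fun y : Z => (y, 𝒜 x.1 * x.2)) := measurable_id.prodMk measurable_const
    have h2 := (measurable_cellP ν hν hνp N i).comp h1
    exact h2
  have hst := entropy_step (P x.1) (gridSet N) (fun i y => cellP N (ν y) (𝒜 x.1 * x.2) i)
    (fun i => cellP N (ν x.1) x.2 i)
    hmc
    (fun i y => measureReal_nonneg)
    (fun i y => by have := hpm y (𝒜 x.1 * x.2).adjugate; exact measureReal_le_one)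
    (fun i => cellP_mart P 𝒜 ν hν hνp N i x.1 x.2 hx)
  simp only [topOp, entG, hellH]
  exact hst

include h𝒜 hdet hν hνp in
lemma defect_step (hstat : μ.bind (fun z => P z) = μ)
    (hsph : ∀ z, ∀ᵐ v ∂(ν z), ‖v‖ = 1)
    (N n : ℕ) (hN : 0 < N) (R : ℝ) (hR : 1 < R) (t : E2) :
    ∫⁻ z, ∫⁻ y, defD 𝒜 ν t (z, y) ∂(P z) ∂μ
      ≤ 8 * ∫⁻ x, ∫⁻ y, hellH 𝒜 ν N (x, y) ∂(P x.1) ∂(walk μ P 𝒜 n)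
        + (ENNReal.ofReal (128 * ‖t‖ ^ 2 * R ^ 4 / N ^ 2)
          + ENNReal.ofReal (4 / Real.log R) * walkL μ P 𝒜 (n + 1)) := by
  have hlR : 0 < Real.log R := Real.log_pos hR
  have hmD : Measurable (fun z => ∫⁻ y, defD 𝒜 ν t (z, y) ∂(P z)) :=
    Measurable.lintegral_kernel_prod_right' (κ := P) (measurable_defD 𝒜 h𝒜 ν hν hνp t)
  have hmH := measurable_topOp' P 𝒜 h𝒜 (measurable_hellH 𝒜 h𝒜 ν hν hνp N)
  have hmL : Measurable (fun x : Z × M2 => ENNReal.ofReal (Real.log (matOpNorm x.2))) :=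
    measurable_lognorm.comp measurable_snd
  have hp : IsProbabilityMeasure (walk μ P 𝒜 n) := by
    constructor
    have := lintegral_walk_fst μ P 𝒜 h𝒜 hstat n (f := fun _ => 1) measurable_const
    simpa using this
  rw [← lintegral_walk_fst μ P 𝒜 h𝒜 hstat n hmD, walkL, lintegral_walk_succ μ P 𝒜 h𝒜 n hmL,
    ← lintegral_const_mul _ hmH, ← lintegral_const_mul _ (measurable_topOp P 𝒜 h𝒜 hmL)]
  have ec : ENNReal.ofReal (128 * ‖t‖ ^ 2 * R ^ 4 / N ^ 2)
      = ∫⁻ x, ENNReal.ofReal (128 * ‖t‖ ^ 2 * R ^ 4 / N ^ 2) ∂(walk μ P 𝒜 n) := by simp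
  rw [ec, ← lintegral_add_left measurable_const, ← lintegral_add_left (hmH.const_mul 8)]
  refine lintegral_mono_ae ?_
  filter_upwards [walk_det μ P 𝒜 h𝒜 hdet n] with x hx
  have hmHx : Measurable (fun y => hellH 𝒜 ν N (x, y)) :=
    (measurable_hellH 𝒜 h𝒜 ν hν hνp N).comp measurable_prodMk_left
  rw [← lintegral_const_mul _ hmHx]
  simp only [topOp, lintegral_const, measure_univ, mul_one]
  have ec2 : ∀ c : ENNReal, c = ∫⁻ _, c ∂(P x.1) := fun c => by simp
  rw [ec2 (ENNReal.ofReal (128 * ‖t‖ ^ 2 * R ^ 4 / N ^ 2)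
    + ENNReal.ofReal (4 / Real.log R) * ENNReal.ofReal (Real.log (matOpNorm (𝒜 x.1 * x.2)))),
    ← lintegral_add_left (hmHx.const_mul 8)]
  refine lintegral_mono fun y => ?_
  have := hνp x.1
  have := hνp y
  have h := pt_ineq (ν x.1) (ν y) (hsph x.1) (hsph y) (𝒜 x.1) x.2 (hdet _) hx N hN R hR t
  have hd : (𝒜 x.1 * x.2).det = 1 := by rw [Matrix.det_mul, hdet, hx, one_mul]
  have hl0 := Real.log_nonneg (one_le_matOpNorm _ hd)
  have h8 : (8 : ENNReal) = ENNReal.ofReal 8 := by simp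
  rw [hellH, defD, h8, ← ENNReal.ofReal_mul (by norm_num), ← ENNReal.ofReal_mul (by positivity),
    ← ENNReal.ofReal_add (by positivity) (by positivity),
    ← ENNReal.ofReal_add (mul_nonneg (by norm_num) (Finset.sum_nonneg fun i _ => sq_nonneg _)) (by positivity)]
  exact ENNReal.ofReal_le_ofReal h

include h𝒜 hdet hν hνp in
lemma summed (hstat : μ.bind (fun z => P z) = μ)
    (hpull : ∀ᵐ z ∂μ, ν z = Measure.map (projAct (𝒜 z).adjugate) ((P z).bind ν))
    (hsph : ∀ z, ∀ᵐ v ∂(ν z), ‖v‖ = 1)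
    (N n : ℕ) (hN : 0 < N) (R : ℝ) (hR : 1 < R) (t : E2) :
    n * ∫⁻ z, ∫⁻ y, defD 𝒜 ν t (z, y) ∂(P z) ∂μ + 8 * ∫⁻ x, entG ν N x ∂(walk μ P 𝒜 n)
      ≤ 8 * ENNReal.ofReal (Real.log ((2 * N + 1) ^ 2) + 1)
        + (n * ENNReal.ofReal (128 * ‖t‖ ^ 2 * R ^ 4 / N ^ 2)
          + ENNReal.ofReal (4 / Real.log R) * ∑ k ∈ Finset.range n, walkL μ P 𝒜 (k + 1)) := by
  induction n with
  | zero =>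
    simp only [Nat.cast_zero, zero_mul, zero_add, Finset.range_zero, Finset.sum_empty, mul_zero,
      add_zero]
    gcongr
    rw [lintegral_walk_zero μ P 𝒜 h𝒜 (measurable_entG ν hν hνp N)]
    calc _ ≤ ∫⁻ _, ENNReal.ofReal (Real.log ((2 * N + 1) ^ 2) + 1) ∂μ := by
          refine lintegral_mono fun z => ENNReal.ofReal_le_ofReal ?_
          have := hνp z
          have hp : IsProbabilityMeasure ((ν z).map (projAct (1 : M2).adjugate)) :=
            Measure.isProbabilityMeasure_map (measurable_projAct_right _).aemeasurable
          have h := entropy_bound (gridSet N) (Finset.card_pos.mp (by rw [gridSet_card]; positivity))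
            (cellP N (ν z) 1) (fun i => measureReal_nonneg)
            (sum_cells_le_one _ _ (measurableSet_cell N) _)
          rw [gridSet_card] at h
          push_cast at h
          exact h
      _ = _ := by simp
  | succ n ih =>
    have h1 := ent_walk_step P μ 𝒜 h𝒜 hdet ν hν hνp hstat hpull N n
    have h2 := defect_step P μ 𝒜 h𝒜 hdet ν hν hνp hstat hsph N n hN R hR t
    rw [Finset.sum_range_succ]
    push_cast
    set d := ∫⁻ z, ∫⁻ y, defD 𝒜 ν t (z, y) ∂(P z) ∂μ
    set g1 := ∫⁻ x, entG ν N x ∂(walk μ P 𝒜 (n + 1))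
    set g0 := ∫⁻ x, entG ν N x ∂(walk μ P 𝒜 n)
    set H := ∫⁻ x, ∫⁻ y, hellH 𝒜 ν N (x, y) ∂(P x.1) ∂(walk μ P 𝒜 n)
    set c := ENNReal.ofReal (128 * ‖t‖ ^ 2 * R ^ 4 / N ^ 2)
    set K := ENNReal.ofReal (4 / Real.log R)
    set Lk := walkL μ P 𝒜 (n + 1)
    set L := ∑ k ∈ Finset.range n, walkL μ P 𝒜 (k + 1)
    set C := 8 * ENNReal.ofReal (Real.log ((2 * N + 1) ^ 2) + 1)
    calc (n + 1) * d + 8 * g1 = n * d + d + 8 * g1 := by ring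
      _ ≤ n * d + (8 * H + (c + K * Lk)) + 8 * g1 := by gcongr
      _ = n * d + 8 * (g1 + H) + (c + K * Lk) := by ring
      _ ≤ n * d + 8 * g0 + (c + K * Lk) := by gcongr
      _ ≤ C + (n * c + K * L) + (c + K * Lk) := by gcongr
      _ = C + ((n + 1) * c + K * (L + Lk)) := by ring

end main

lemma asymp (d T : ℝ) (l : ℕ → ℝ) (hl0 : ∀ n, 0 ≤ l n)
    (hl : Tendsto (fun n : ℕ => (1 / (n : ℝ)) * l n) atTop (nhds 0))
    (h : ∀ (N n : ℕ) (R : ℝ), 0 < N → 1 < R → n * d ≤ 8 * (Real.log ((2 * N + 1) ^ 2) + 1)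
      + (n * (128 * T ^ 2 * R ^ 4 / N ^ 2) + 4 / Real.log R * ∑ k ∈ Finset.range n, l (k + 1))) :
    d ≤ 0 := by
  have main : ∀ ε : ℝ, 0 < ε → d ≤ 48 * ε := by
    intro ε hε
    have hc : Tendsto (fun k : ℕ => (1 / ((k + 1 : ℕ) : ℝ)) * l (k + 1)) atTop (nhds 0) :=
      hl.comp (tendsto_add_atTop_nat 1)
    have hces := hc.cesaro
    have hinv : Tendsto (fun n : ℕ => ((n : ℝ))⁻¹) atTop (nhds 0) := tendsto_inv_atTop_nhds_zero_nat
    have hlim : Tendsto (fun n : ℕ => (8 * (2 * Real.log 5 + 1) + 64 * T ^ 2 / ε) * ((n : ℝ))⁻¹ + 48 * ε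
        + 4 / ε * ((n : ℝ)⁻¹ * ∑ k ∈ Finset.range n, (1 / ((k + 1 : ℕ) : ℝ)) * l (k + 1)))
        atTop (nhds ((8 * (2 * Real.log 5 + 1) + 64 * T ^ 2 / ε) * 0 + 48 * ε + 4 / ε * 0)) :=
      ((hinv.const_mul _).add_const _).add (hces.const_mul _)
    simp only [mul_zero, zero_add, add_zero] at hlim
    refine ge_of_tendsto hlim ?_
    filter_upwards [eventually_gt_atTop 0] with n hn
    have hn' : (0 : ℝ) < n := by exact_mod_cast hn
    have hx : 0 < ε * n := by positivity
    set X := Real.exp (3 * (ε * n)) with hX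
    have hX1 : 1 ≤ X := Real.one_le_exp (by positivity)
    set N := ⌈X⌉₊ with hNdef
    have hNX : X ≤ N := Nat.le_ceil _
    have hN2 : (N : ℝ) ≤ 2 * X := by
      have := Nat.ceil_lt_add_one (a := X) (by linarith)
      linarith
    have hNpos : (0 : ℝ) < N := by linarith
    have hN0 : 0 < N := by exact_mod_cast hNpos
    have hh := h N n (Real.exp (ε * n)) hN0 (Real.one_lt_exp_iff.mpr hx)
    rw [Real.log_exp] at hh
    have a1 : Real.log ((2 * N + 1) ^ 2) ≤ 2 * (Real.log 5 + 3 * (ε * n)) := by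
      rw [Real.log_pow]
      push_cast
      have : Real.log (2 * N + 1) ≤ Real.log (5 * X) := Real.log_le_log (by positivity) (by linarith)
      rw [Real.log_mul (by norm_num) (by linarith), hX, Real.log_exp] at this
      linarith
    have a2 : Real.exp (ε * n) ^ 4 / N ^ 2 ≤ 1 / (2 * (ε * n)) := by
      have b1 : 2 * (ε * n) ≤ Real.exp (2 * (ε * n)) := by
        have := Real.add_one_le_exp (2 * (ε * n)); linarith
      rw [div_le_div_iff₀ (by positivity) (by positivity), one_mul]
      calc Real.exp (ε * n) ^ 4 * (2 * (ε * n)) ≤ Real.exp (ε * n) ^ 4 * Real.exp (2 * (ε * n)) := by gcongr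
        _ = X ^ 2 := by
          rw [hX, ← Real.exp_nat_mul, ← Real.exp_nat_mul, ← Real.exp_add]; congr 1; push_cast; ring
        _ ≤ N ^ 2 := by gcongr
    have a3 : ∑ k ∈ Finset.range n, l (k + 1)
        ≤ n * ∑ k ∈ Finset.range n, (1 / ((k + 1 : ℕ) : ℝ)) * l (k + 1) := by
      rw [Finset.mul_sum]
      refine Finset.sum_le_sum fun k hk => ?_
      have hk1 : ((k + 1 : ℕ) : ℝ) ≤ n := by exact_mod_cast Finset.mem_range.mp hk
      have hk0 : (0 : ℝ) < ((k + 1 : ℕ) : ℝ) := by positivity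
      rw [← mul_assoc, mul_one_div]
      exact le_mul_of_one_le_left (hl0 _) ((one_le_div hk0).mpr hk1)
    set S1 := ∑ k ∈ Finset.range n, (1 / ((k + 1 : ℕ) : ℝ)) * l (k + 1)
    have hfin : n * d ≤ 8 * (2 * (Real.log 5 + 3 * (ε * n)) + 1)
        + (n * (128 * T ^ 2 * (1 / (2 * (ε * n)))) + 4 / (ε * n) * (n * S1)) := by
      refine hh.trans ?_
      rw [mul_div_assoc]
      gcongr
    have e : 8 * (2 * (Real.log 5 + 3 * (ε * n)) + 1)
        + (n * (128 * T ^ 2 * (1 / (2 * (ε * n)))) + 4 / (ε * n) * (n * S1))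
        = n * ((8 * (2 * Real.log 5 + 1) + 64 * T ^ 2 / ε) * ((n : ℝ))⁻¹ + 48 * ε
        + 4 / ε * ((n : ℝ)⁻¹ * S1)) := by
      field_simp
      ring
    rw [e] at hfin
    exact le_of_mul_le_mul_left hfin hn'
  by_contra hd
  push Not at hd
  have := main (d / 96) (by positivity)
  linarith

/-- Furstenberg-type criterion (Proposition 2.7 of the paper): if the top Lyapunov exponent
`λ₊ = lim (1/n)·E[log‖𝒜(z_{n−1})⋯𝒜(z₀)‖]` of a measurable `SL₂(ℝ)`-cocycle over a Markov
chain with stationary law `μ` exists and equals `0`, and `ν : Z → 𝒫(S¹)` is a measurable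
family of probability measures on the unit circle satisfying the twisted pullback condition
`ν_z = (𝒜(z)⁻¹)•_* ∫ ν_y P(z,dy)` μ-a.e., then the family is almost surely invariant:
`(𝒜(z₀))•_* ν_{z₀} = ν_{z₁}` for `P(z₀,dz₁)μ(dz₀)`-almost every `(z₀,z₁)`. -/
theorem furstenberg_criterion_invariant_measures
    {Z : Type} [MeasurableSpace Z] [StandardBorelSpace Z]
    (P : Kernel Z Z) [IsMarkovKernel P]
    (μ : Measure Z) [IsProbabilityMeasure μ]
    (hstat : μ.bind (fun z => P z) = μ)
    (𝒜 : Z → Matrix (Fin 2) (Fin 2) ℝ)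
    (h𝒜meas : Measurable 𝒜)
    (h𝒜det : ∀ z, (𝒜 z).det = 1)
    (hint : Integrable (fun z => Real.log (matOpNorm (𝒜 z))) μ)
    (hint' : Integrable (fun z => Real.log (matOpNorm ((𝒜 z)⁻¹))) μ)
    (ν : Z → Measure (EuclideanSpace ℝ (Fin 2)))
    (hνmeas : Measurable ν)
    (hνprob : ∀ z, IsProbabilityMeasure (ν z))
    (hνsphere : ∀ z, ν z (Metric.sphere (0 : EuclideanSpace ℝ (Fin 2)) 1) = 1)
    (hpull : ∀ᵐ z ∂μ, ν z = Measure.map (projAct ((𝒜 z)⁻¹)) ((P z).bind ν))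
    (hLyap : Tendsto (fun n : ℕ =>
        (1 / (n : ℝ)) * ∫ z, (∫ B, Real.log (matOpNorm B) ∂(prodLaw P 𝒜 n z)) ∂μ)
      atTop (nhds 0)) :
    ∀ᵐ p ∂(μ.compProd P), Measure.map (projAct (𝒜 p.1)) (ν p.1) = ν p.2 := by
  have hpull' : ∀ᵐ z ∂μ, ν z = Measure.map (projAct (𝒜 z).adjugate) ((P z).bind ν) := by
    filter_upwards [hpull] with z hz
    rw [Matrix.inv_def, h𝒜det] at hz
    simpa using hz
  have hsph : ∀ z, ∀ᵐ v ∂(ν z), ‖v‖ = 1 := by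
    intro z
    have := hνprob z
    have h : ∀ᵐ v ∂(ν z), v ∈ Metric.sphere (0 : EuclideanSpace ℝ (Fin 2)) 1 :=
      (mem_ae_iff_prob_eq_one Metric.isClosed_sphere.measurableSet).mpr (hνsphere z)
    filter_upwards [h] with v hv
    simpa using hv
  have hfin := walkL_ne_top μ P 𝒜 h𝒜meas hstat h𝒜det hint
  have hzero : ∀ t : E2, ∀ᵐ p ∂(μ.compProd P), defD 𝒜 ν t p = 0 := by
    intro t
    have hmD := measurable_defD 𝒜 h𝒜meas ν hνmeas hνprob t
    set d := ∫⁻ z, ∫⁻ y, defD 𝒜 ν t (z, y) ∂(P z) ∂μ with hd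
    have hdle : d ≤ 4 := by
      have hb : ∀ p, defD 𝒜 ν t p ≤ 4 := by
        intro p
        have := hνprob p.1
        have := hνprob p.2
        have : IsProbabilityMeasure ((ν p.1).map (projAct (𝒜 p.1))) :=
          Measure.isProbabilityMeasure_map (measurable_projAct_right _).aemeasurable
        have h4 : (4 : ENNReal) = ENNReal.ofReal (2 ^ 2) := by norm_num
        rw [defD, h4]
        apply ENNReal.ofReal_le_ofReal
        gcongr
        refine (norm_sub_le _ _).trans ?_
        have a := norm_charFun_le_one (μ := (ν p.1).map (projAct (𝒜 p.1))) t
        have b := norm_charFun_le_one (μ := ν p.2) t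
        linarith
      calc d ≤ ∫⁻ z, ∫⁻ y, 4 ∂(P z) ∂μ := lintegral_mono fun z => lintegral_mono fun y => hb _
        _ = 4 := by simp
    have hdt : d ≠ ⊤ := ne_top_of_le_ne_top (by simp) hdle
    have hd0 : d.toReal ≤ 0 := by
      refine asymp d.toReal ‖t‖ (fun n => (walkL μ P 𝒜 n).toReal) (fun n => ENNReal.toReal_nonneg)
        ?_ ?_
      · simpa only [walkL_eq μ P 𝒜 h𝒜meas hstat h𝒜det hint] using hLyap
      · intro N n R hN hR
        have hlR : 0 < Real.log R := Real.log_pos hR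
        have h := summed P μ 𝒜 h𝒜meas h𝒜det ν hνmeas hνprob hstat hpull' hsph N n hN R hR t
        have h1 := le_self_add.trans h
        have hN1 : (1 : ℝ) ≤ (2 * N + 1) ^ 2 := by
          have : (0 : ℝ) ≤ N := by positivity
          nlinarith
        have hlog := Real.log_nonneg hN1
        have hs : ∑ k ∈ Finset.range n, walkL μ P 𝒜 (k + 1)
            = ENNReal.ofReal (∑ k ∈ Finset.range n, (walkL μ P 𝒜 (k + 1)).toReal) := by
          rw [ENNReal.ofReal_sum_of_nonneg fun i _ => ENNReal.toReal_nonneg]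
          exact Finset.sum_congr rfl fun k _ => (ENNReal.ofReal_toReal (hfin _)).symm
        have hs0 : 0 ≤ ∑ k ∈ Finset.range n, (walkL μ P 𝒜 (k + 1)).toReal :=
          Finset.sum_nonneg fun i _ => ENNReal.toReal_nonneg
        have h8 : (8 : ENNReal) = ENNReal.ofReal 8 := by simp
        rw [hs, ← hd, ← ENNReal.ofReal_toReal hdt, ← ENNReal.ofReal_natCast n, h8,
          ← ENNReal.ofReal_mul (by positivity), ← ENNReal.ofReal_mul (by positivity),
          ← ENNReal.ofReal_mul (by positivity), ← ENNReal.ofReal_mul (by positivity),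
          ← ENNReal.ofReal_add (by positivity) (by positivity),
          ← ENNReal.ofReal_add (by positivity) (by positivity)] at h1
        exact (ENNReal.ofReal_le_ofReal_iff (by positivity)).mp h1
    have hd00 : d = 0 := by
      rcases (ENNReal.toReal_eq_zero_iff d).mp (le_antisymm hd0 ENNReal.toReal_nonneg) with h | h
      · exact h
      · exact absurd h hdt
    rw [hd, ← Measure.lintegral_compProd hmD, lintegral_eq_zero_iff hmD] at hd00
    exact hd00
  obtain ⟨T, hTc, hTd⟩ := TopologicalSpace.exists_countable_dense E2
  have hall : ∀ᵐ p ∂(μ.compProd P), ∀ t ∈ T, defD 𝒜 ν t p = 0 :=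
    (ae_ball_iff hTc).mpr fun t _ => hzero t
  filter_upwards [hall] with p hp
  have := hνprob p.1
  have := hνprob p.2
  have : IsProbabilityMeasure ((ν p.1).map (projAct (𝒜 p.1))) :=
    Measure.isProbabilityMeasure_map (measurable_projAct_right _).aemeasurable
  refine Measure.ext_of_charFun ?_
  refine Continuous.ext_on hTd continuous_charFun continuous_charFun ?_
  intro t ht
  have h := hp t ht
  rw [defD, ENNReal.ofReal_eq_zero] at h
  have h2 : ‖charFun ((ν p.1).map (projAct (𝒜 p.1))) t - charFun (ν p.2) t‖ = 0 := by
    have := sq_nonneg ‖charFun ((ν p.1).map (projAct (𝒜 p.1))) t - charFun (ν p.2) t‖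
    exact pow_eq_zero_iff (two_ne_zero) |>.mp (le_antisymm h this)
  exact sub_eq_zero.mp (norm_eq_zero.mp h2)
end

section
/- Let a₀, b₀, a₁, b₁ ∈ ℝ and T > 0. Let f₁, f₂ : ℝ → ℝ be continuous with f₁(t) = 0 for all t ∉ (0, T/2), f₂(t) = 0 for all t ∉ (T/2, T), ∫₀^{T/2} f₁(s) ds = a₁ − a₀, and ∫_{T/2}^{T} f₂(s) ds = b₁ − b₀. Define u(t,y) := f₁(t)·(cos(y₂ − b₀), 0) + f₂(t)·(0, cos(y₁ − a₁)) for t ∈ ℝ, y = (y₁,y₂) ∈ ℝ². Then u(0, ·) = u(T, ·) = 0, and every differentiable x : [0,T] → ℝ² with x(0) = (a₀, b₀) and x′(t) = u(t, x(t)) for all t ∈ [0,T] satisfies x(T/2) = (a₁, b₀) and x(T) = (a₁, b₁). -/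
open MeasureTheory

theorem shear_aux (a b c : ℝ) (hab : a ≤ b) (f p q : ℝ → ℝ) (hf : Continuous f)
    (hp : ∀ t ∈ Set.Icc a b, HasDerivAt p (f t * Real.cos (q t - c)) t)
    (hq : ∀ t ∈ Set.Icc a b, HasDerivAt q 0 t) (hqa : q a = c) :
    (∫ s in a..b, f s) = p b - p a ∧ q b = c := by
  have hc : ∀ t ∈ Set.Icc a b, q t = c := by
    intro t ht
    rw [← hqa]
    exact constant_of_has_deriv_right_zero
      (fun t ht => (hq t ht).continuousAt.continuousWithinAt)
      (fun t ht => (hq t (Set.Ico_subset_Icc_self ht)).hasDerivWithinAt) t ht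
  refine ⟨?_, hc b (Set.right_mem_Icc.2 hab)⟩
  refine intervalIntegral.integral_eq_sub_of_hasDerivAt (fun t ht => ?_)
    (hf.intervalIntegrable a b)
  rw [Set.uIcc_of_le hab] at ht
  simpa [hc t ht] using hp t ht

/-- Combined shear-flow controllability of the particle position: a horizontal shear
supported in `(0, T/2)` moves the first coordinate from `a₀` to `a₁`, and a vertical shear
supported in `(T/2, T)` then moves the second coordinate from `b₀` to `b₁`; the combined
velocity field vanishes at times `0` and `T`. -/
theorem shear_position_controllability
    (a₀ b₀ a₁ b₁ T : ℝ) (hT : 0 < T)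
    (f₁ f₂ : ℝ → ℝ) (hf₁c : Continuous f₁) (hf₂c : Continuous f₂)
    (hf₁supp : ∀ t, t ∉ Set.Ioo 0 (T/2) → f₁ t = 0)
    (hf₂supp : ∀ t, t ∉ Set.Ioo (T/2) T → f₂ t = 0)
    (hf₁int : (∫ s in (0:ℝ)..(T/2), f₁ s) = a₁ - a₀)
    (hf₂int : (∫ s in (T/2)..T, f₂ s) = b₁ - b₀)
    (u : ℝ → ℝ × ℝ → ℝ × ℝ)
    (hu : ∀ t y, u t y = (f₁ t * Real.cos (y.2 - b₀), f₂ t * Real.cos (y.1 - a₁))) :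
    (∀ y, u 0 y = 0) ∧ (∀ y, u T y = 0) ∧
    ∀ x : ℝ → ℝ × ℝ, x 0 = (a₀, b₀) →
      (∀ t ∈ Set.Icc (0:ℝ) T, HasDerivAt x (u t (x t)) t) →
      x (T/2) = (a₁, b₀) ∧ x T = (a₁, b₁) := by
  refine ⟨fun y => ?_, fun y => ?_, fun x hx0 hx => ?_⟩
  · rw [hu, hf₁supp 0 (by simp), hf₂supp 0 (fun h => by linarith [h.1])]
    simp
  · rw [hu, hf₁supp T (fun h => by linarith [h.2]), hf₂supp T (by simp)]
    simp
  have h1 : ∀ t ∈ Set.Icc (0:ℝ) T,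
      HasDerivAt (fun t => (x t).1) (f₁ t * Real.cos ((x t).2 - b₀)) t := by
    intro t ht
    have h := hx t ht
    rw [hu] at h
    exact h.fst
  have h2 : ∀ t ∈ Set.Icc (0:ℝ) T,
      HasDerivAt (fun t => (x t).2) (f₂ t * Real.cos ((x t).1 - a₁)) t := by
    intro t ht
    have h := hx t ht
    rw [hu] at h
    exact h.snd
  obtain ⟨hA, hB⟩ := shear_aux 0 (T/2) b₀ (by linarith) f₁ (fun t => (x t).1)
    (fun t => (x t).2) hf₁c (fun t ht => h1 t ⟨ht.1, by linarith [ht.2]⟩)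
    (fun t ht => by
      have h := h2 t ⟨ht.1, by linarith [ht.2]⟩
      rwa [hf₂supp t (fun h => by linarith [h.1, ht.2]), zero_mul] at h) (by simp [hx0])
  have hA' : (x (T/2)).1 = a₁ := by
    simp only [hx0] at hA
    linarith
  obtain ⟨hC, hD⟩ := shear_aux (T/2) T a₁ (by linarith) f₂ (fun t => (x t).2)
    (fun t => (x t).1) hf₂c (fun t ht => h2 t ⟨by linarith [ht.1], ht.2⟩)
    (fun t ht => by
      have h := h1 t ⟨by linarith [ht.1], ht.2⟩
      rwa [hf₁supp t (fun h => by linarith [h.2, ht.1]), zero_mul] at h) hA'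
  refine ⟨Prod.ext hA' hB, Prod.ext hD ?_⟩
  simp only at hB hC ⊢
  linarith
end
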